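/- arXiv:2211.11341 — 3 statements merged into one kernel-verified Lean document; each statement's English description precedes it below -/
import Mathlib

section
/- For every fixed integer t ≥ 1 there exists a constant C = C(t) > 0 such that for all integers k ≥ t+3 and all integers n ≥ C · k^{3/2 + ε}, where ε = (10+t)/(2(k−t−2)), every t-intersecting family F ⊆ binom([n],k) satisfies |I(F)| ≤ |I(A_t)|, where A_t = {A ∈ binom([n],k) : |A ∩ {1,…,t+2}| ≥ t+1}. -/
open Finset

/-- The collection of distinct intersections `{F ∩ G : F, G ∈ 𝓕, F ≠ G}`. -/
def interFam (F : Finset (Finset ℕ)) : Finset (Finset ℕ) :=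
  ((F ×ˢ F).filter fun p => p.1 ≠ p.2).image fun p => p.1 ∩ p.2

/-- A family is `t`-intersecting if any two members meet in at least `t` elements. -/
def tIntersecting (t : ℕ) (F : Finset (Finset ℕ)) : Prop :=
  ∀ A ∈ F, ∀ B ∈ F, t ≤ (A ∩ B).card

/-- The family `𝓐_t = {A ∈ [n]^(k) : |A ∩ {1,…,t+2}| ≥ t+1}`. -/
def At (n k t : ℕ) : Finset (Finset ℕ) :=
  ((Finset.Icc 1 n).powersetCard k).filter fun A => t + 1 ≤ (A ∩ Finset.Icc 1 (t + 2)).card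

/-- A `t`-intersecting family `F ⊆ [n]^(k)` is saturated if no `k`-set outside `F`
can be added keeping the `t`-intersecting property. -/
def saturated (n k t : ℕ) (F : Finset (Finset ℕ)) : Prop :=
  ∀ G ∈ (Finset.Icc 1 n).powersetCard k, G ∉ F → ¬ tIntersecting t (insert G F)

/-- The family of `t`-transversals `T(F)`. -/
def transv (n k t : ℕ) (F : Finset (Finset ℕ)) : Finset (Finset ℕ) :=
  (Finset.Icc 1 n).powerset.filter fun T => T.card ≤ k ∧ ∀ A ∈ F, t ≤ (T ∩ A).card

/-- The minimal members (under inclusion) of a family. -/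
def minFam (S : Finset (Finset ℕ)) : Finset (Finset ℕ) :=
  S.filter fun B => ∀ B' ∈ S, B' ⊆ B → B' = B

/-- weak spreadness of an indexed family, normalised by `N` -/
def Spr {α ι : Type*} [DecidableEq α] (R N : ℕ) (J : Finset ι) (S : ι → Finset α) : Prop :=
  ∀ Y : Finset α, R ^ Y.card * (J.filter fun i => Y ⊆ S i).card ≤ N

/-- colour class of colour zero -/
def cls {α : Type*} [Fintype α] {M : ℕ} (c : α → Fin (M + 1)) : Finset α :=
  univ.filter fun x => c x = 0

lemma round_single {α ι : Type*} [Fintype α] [DecidableEq α]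
    (R N K u M : ℕ) (J : Finset ι) (S : ι → Finset α) (hK : ∀ i ∈ J, (S i).card ≤ K)
    (hS : Spr R N J S) (W : Finset α) :
    R ^ u * (J.filter fun i => S i ⊆ W ∧ ∀ i' ∈ J, S i' ⊆ W → u ≤ (S i ∩ S i').card).card
      ≤ 2 ^ K * N := by
  classical
  set T := J.filter fun i => S i ⊆ W ∧ ∀ i' ∈ J, S i' ⊆ W → u ≤ (S i ∩ S i').card with hT
  rcases T.eq_empty_or_nonempty with h | ⟨i0, h0⟩
  · simp [h]
  · have h0' := (mem_filter.1 h0)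
    have hsub : T ⊆ (powersetCard u (S i0)).biUnion fun Y => J.filter fun i => Y ⊆ S i := by
      intro i hi
      have hi' := mem_filter.1 hi
      have := hi'.2.2 i0 h0'.1 h0'.2.1
      obtain ⟨Y, hY, hYc⟩ := exists_subset_card_eq this
      simp only [mem_biUnion, mem_powersetCard, mem_filter]
      exact ⟨Y, ⟨hY.trans inter_subset_right, hYc⟩, hi'.1, hY.trans inter_subset_left⟩
    calc R ^ u * T.card ≤ R ^ u * ∑ Y ∈ powersetCard u (S i0), (J.filter fun i => Y ⊆ S i).card :=
          Nat.mul_le_mul_left _ ((card_le_card hsub).trans card_biUnion_le)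
      _ = ∑ Y ∈ powersetCard u (S i0), R ^ u * (J.filter fun i => Y ⊆ S i).card := by
          rw [mul_sum]
      _ ≤ ∑ Y ∈ powersetCard u (S i0), N := by
          apply sum_le_sum
          intro Y hY
          have := hS Y
          rwa [(mem_powersetCard.1 hY).2] at this
      _ = (S i0).card.choose u * N := by simp [card_powersetCard]
      _ ≤ 2 ^ K * N := by
          apply Nat.mul_le_mul_right
          calc (S i0).card.choose u ≤ 2 ^ (S i0).card := Nat.choose_le_two_pow _ _
            _ ≤ 2 ^ K := Nat.pow_le_pow_right (by norm_num) (hK i0 h0'.1)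

/-- bad pairs -/
def badP {α ι : Type*} [Fintype α] [DecidableEq α] {M : ℕ} (u : ℕ) (J : Finset ι) (S : ι → Finset α)
    (c : α → Fin (M + 1)) (i : ι) : Prop :=
  ∀ i' ∈ J, S i' ⊆ cls c ∪ S i → u ≤ (S i' \ cls c).card

open Classical in
lemma round_count {α ι : Type*} [Fintype α] [DecidableEq α]
    (R N K u M : ℕ) (J : Finset ι) (S : ι → Finset α) (hK : ∀ i ∈ J, (S i).card ≤ K)
    (hS : Spr R N J S) :
    R ^ u * (((univ : Finset (α → Fin (M + 1))) ×ˢ J).filter fun p => badP u J S p.1 p.2).card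
      ≤ (M + 1) ^ Fintype.card α * ((2 * (M + 1)) ^ K * N) := by
  set Bd := ((univ : Finset (α → Fin (M + 1))) ×ˢ J).filter fun p => badP u J S p.1 p.2
  set T : Finset ((α → Fin (M + 1)) × ι) := (univ ×ˢ J).filter fun p =>
    S p.2 ⊆ cls p.1 ∧ ∀ i' ∈ J, S i' ⊆ cls p.1 → u ≤ (S p.2 ∩ S i').card with hT
  let f : (α → Fin (M + 1)) × ι → (α → Fin (M + 1)) × ι :=
    fun p => (fun x => if x ∈ S p.2 then 0 else p.1 x, p.2)
  have hcls : ∀ p, cls (f p).1 = cls p.1 ∪ S p.2 := by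
    intro p
    ext x
    by_cases hx : x ∈ S p.2 <;> simp [cls, f, hx]
  have hmap : ∀ p ∈ Bd, f p ∈ T := by
    intro p hp
    have hp' := mem_filter.1 hp
    simp only [hT, mem_filter, mem_product, mem_univ, true_and]
    refine ⟨(mem_product.1 hp'.1).2, ?_, ?_⟩
    · rw [hcls]; exact subset_union_right
    · intro i' hi' hsub
      rw [hcls] at hsub
      refine (hp'.2 i' hi' hsub).trans (card_le_card ?_)
      intro x hx
      rw [mem_sdiff] at hx
      have := hsub hx.1
      rw [mem_union] at this
      exact mem_inter.2 ⟨this.resolve_left hx.2, hx.1⟩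
  have hfib : ∀ b ∈ T, (Bd.filter fun a => f a = b).card ≤ (M + 1) ^ K := by
    intro b hb
    have hbJ : b.2 ∈ J := (mem_product.1 (mem_filter.1 hb).1).2
    calc (Bd.filter fun a => f a = b).card ≤ (univ : Finset (↥(S b.2) → Fin (M + 1))).card := by
          apply card_le_card_of_injOn (fun a x => a.1 x.1) (by simp)
          intro a ha a' ha' h
          simp only [coe_filter, Set.mem_ofPred_eq] at ha ha'
          have h2 : a.2 = b.2 := by rw [← ha.2]
          have h2' : a'.2 = b.2 := by rw [← ha'.2]
          refine Prod.ext (funext fun x => ?_) (h2.trans h2'.symm)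
          by_cases hx : x ∈ S b.2
          · exact congrFun h ⟨x, hx⟩
          · have e1 := congrFun (congrArg Prod.fst ha.2) x
            have e2 := congrFun (congrArg Prod.fst ha'.2) x
            simp only [f, h2, h2', hx, if_false] at e1 e2
            rw [e1, e2]
      _ = (M + 1) ^ (S b.2).card := by simp
      _ ≤ (M + 1) ^ K := Nat.pow_le_pow_right (by omega) (hK _ hbJ)
  have h1 : Bd.card ≤ (M + 1) ^ K * T.card :=
    card_le_mul_card_image_of_maps_to hmap _ hfib
  have h2 : R ^ u * T.card ≤ (M + 1) ^ Fintype.card α * (2 ^ K * N) := by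
    have : T.card = ∑ c : α → Fin (M + 1), (J.filter fun i => S i ⊆ cls c ∧
        ∀ i' ∈ J, S i' ⊆ cls c → u ≤ (S i ∩ S i').card).card := by
      rw [hT, card_filter, sum_product]
      apply sum_congr rfl
      intro c _
      rw [card_filter]
    rw [this, mul_sum]
    calc _ ≤ ∑ c : α → Fin (M + 1), 2 ^ K * N :=
          sum_le_sum fun c _ => round_single R N K u M J S hK hS (cls c)
      _ = _ := by simp
  calc R ^ u * Bd.card ≤ R ^ u * ((M + 1) ^ K * T.card) := Nat.mul_le_mul_left _ h1
    _ = (M + 1) ^ K * (R ^ u * T.card) := by ring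
    _ ≤ (M + 1) ^ K * ((M + 1) ^ Fintype.card α * (2 ^ K * N)) := Nat.mul_le_mul_left _ h2
    _ = _ := by rw [mul_pow]; ring

/-- union of the zero colour classes -/
def VV {α : Type*} [Fintype α] [DecidableEq α] {M r : ℕ} (ω : Fin r → α → Fin (M + 1)) : Finset α :=
  univ.biUnion fun j => cls (ω j)

lemma mem_VV {α : Type*} [Fintype α] [DecidableEq α] {M r : ℕ} (ω : Fin r → α → Fin (M + 1)) (x : α) :
    x ∈ VV ω ↔ ∃ j, ω j x = 0 := by
  simp [VV, cls]

open Classical in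
lemma bad_colors {α ι : Type*} [Fintype α] [DecidableEq α]
    (R N β u M : ℕ) (hR : 4 * (M + 1) ^ 2 ≤ R) (hN : 0 < N) (hu : 1 ≤ u)
    (J : Finset ι) (S : ι → Finset α) (hK : ∀ i ∈ J, (S i).card ≤ 2 * u) (hS : Spr R N J S) :
    R * ((univ : Finset (α → Fin (M + 1))).filter fun c =>
        N < (J.filter fun i => badP u J S c i).card * β).card
      ≤ β * (4 * (M + 1) ^ 2) * (M + 1) ^ Fintype.card α := by
  set Cb := (univ : Finset (α → Fin (M + 1))).filter fun c =>
        N < (J.filter fun i => badP u J S c i).card * β with hCb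
  have h := round_count R N (2 * u) u M J S hK hS
  set Bd := ((univ : Finset (α → Fin (M + 1))) ×ˢ J).filter fun p => badP u J S p.1 p.2 with hBd
  have h1 : Cb.card * N ≤ Bd.card * β := by
    have e : Bd.card = ∑ c : α → Fin (M + 1), (J.filter fun i => badP u J S c i).card := by
      rw [hBd, card_filter, sum_product]
      apply sum_congr rfl
      intro c _
      rw [card_filter]
    rw [e, sum_mul]
    calc Cb.card * N = ∑ c ∈ Cb, N := by simp
      _ ≤ ∑ c ∈ Cb, (J.filter fun i => badP u J S c i).card * β :=
          sum_le_sum fun c hc => (mem_filter.1 hc).2.le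
      _ ≤ _ := sum_le_univ_sum_of_nonneg (fun _ => Nat.zero_le _)
  set A := 4 * (M + 1) ^ 2 with hA
  set X := (M + 1) ^ Fintype.card α
  have hApos : 0 < A := by positivity
  have hRpos : 0 < R := lt_of_lt_of_le hApos hR
  have hAu : (2 * (M + 1)) ^ (2 * u) = A ^ u := by rw [pow_mul, hA]; congr 1; ring
  rw [hAu] at h
  obtain ⟨v, rfl⟩ : ∃ v, u = v + 1 := ⟨u - 1, by omega⟩
  have h2 : (R * Cb.card) * (R ^ v * N) ≤ (β * A * X) * (R ^ v * N) := by
    calc (R * Cb.card) * (R ^ v * N) = R ^ (v + 1) * (Cb.card * N) := by ring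
      _ ≤ R ^ (v + 1) * (Bd.card * β) := Nat.mul_le_mul_left _ h1
      _ = (R ^ (v + 1) * Bd.card) * β := by ring
      _ ≤ (X * (A ^ (v + 1) * N)) * β := Nat.mul_le_mul_right _ h
      _ = (β * A * X) * (A ^ v * N) := by ring
      _ ≤ _ := by gcongr
  exact Nat.le_of_mul_le_mul_right h2 (by positivity)

open Classical in
lemma iter_lemma {α ι : Type*} [Fintype α] [DecidableEq α]
    (R N β M : ℕ) (hR : 4 * (M + 1) ^ 2 ≤ R) (hN : 0 < N) : ∀ (r : ℕ)
    (J : Finset ι) (S : ι → Finset α), (∀ i ∈ J, (S i).card < 2 ^ r) → Spr R N J S →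
    r * N < J.card * β →
    R * ((univ : Finset (Fin r → α → Fin (M + 1))).filter fun ω =>
        ∀ i ∈ J, ¬ S i ⊆ VV ω).card
      ≤ r * (β * (4 * (M + 1) ^ 2)) * ((M + 1) ^ Fintype.card α) ^ r := by
  intro r
  induction r with
  | zero =>
    intro J S hK hS hJ
    have hne : J.Nonempty := by
      rw [← card_pos]; by_contra h
      have : J.card = 0 := by omega
      simp [this] at hJ
    obtain ⟨i, hi⟩ := hne
    have h0 : S i = ∅ := by have := hK i hi; simpa using this
    have : ((univ : Finset (Fin 0 → α → Fin (M + 1))).filter fun ω =>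
        ∀ i ∈ J, ¬ S i ⊆ VV ω) = ∅ := by
      apply filter_false_of_mem
      intro ω _ h
      exact h i hi (by simp [h0])
    rw [this]; simp
  | succ r ih =>
    intro J S hK hS hJ
    have hbad := bad_colors R N β (2 ^ r) M hR hN (Nat.one_le_two_pow) J S
      (fun i hi => by have := hK i hi; rw [pow_succ] at this; omega) hS
    set Cb := (univ : Finset (α → Fin (M + 1))).filter fun c =>
        N < (J.filter fun i => badP (2 ^ r) J S c i).card * β with hCb
    set X := (M + 1) ^ Fintype.card α with hX
    set A := 4 * (M + 1) ^ 2 with hA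
    have hXc : Fintype.card (α → Fin (M + 1)) = X := by simp [hX]
    have hXr : Fintype.card (Fin r → α → Fin (M + 1)) = X ^ r := by
      rw [Fintype.card_fun, hXc, Fintype.card_fin]
    have hsum : ((univ : Finset (Fin (r + 1) → α → Fin (M + 1))).filter fun ω =>
        ∀ i ∈ J, ¬ S i ⊆ VV ω).card = ∑ c : α → Fin (M + 1),
          ((univ : Finset (Fin r → α → Fin (M + 1))).filter fun ω =>
            ∀ i ∈ J, ¬ S i ⊆ VV (Fin.cons c ω : Fin (r + 1) → α → Fin (M + 1))).card := by
      rw [card_filter, ← Equiv.sum_comp (Fin.consEquiv fun _ => α → Fin (M + 1)),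
        Fintype.sum_prod_type]
      apply sum_congr rfl
      intro c _
      rw [card_filter]
      rfl
    have hgood : ∀ c, c ∉ Cb → R * ((univ : Finset (Fin r → α → Fin (M + 1))).filter fun ω =>
            ∀ i ∈ J, ¬ S i ⊆ VV (Fin.cons c ω : Fin (r + 1) → α → Fin (M + 1))).card
            ≤ r * (β * A) * X ^ r := by
      intro c hc
      have hc' : (J.filter fun i => badP (2 ^ r) J S c i).card * β ≤ N := by
        by_contra h
        exact hc (mem_filter.2 ⟨mem_univ _, not_le.1 h⟩)
      set J' := J.filter fun i => ¬ badP (2 ^ r) J S c i with hJ'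
      have hex : ∀ i, ∃ i', i ∈ J' → i' ∈ J ∧ S i' ⊆ cls c ∪ S i ∧ (S i' \ cls c).card < 2 ^ r := by
        intro i
        by_cases hi : i ∈ J'
        · have := (mem_filter.1 hi).2
          unfold badP at this
          push Not at this
          obtain ⟨i', h1, h2, h3⟩ := this
          exact ⟨i', fun _ => ⟨h1, h2, h3⟩⟩
        · exact ⟨i, fun h => absurd h hi⟩
      choose φ hφ using hex
      have key := ih J' (fun i => S (φ i) \ cls c) (fun i hi => (hφ i hi).2.2) ?_ ?_
      · refine le_trans (Nat.mul_le_mul_left _ (card_le_card ?_)) key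
        intro ω hω
        have hω' := (mem_filter.1 hω).2
        refine mem_filter.2 ⟨mem_univ _, fun i hi hsub => ?_⟩
        refine hω' (φ i) (hφ i hi).1 ?_
        intro x hx
        rw [mem_VV]
        by_cases hxc : x ∈ cls c
        · exact ⟨0, by simpa [cls] using hxc⟩
        · have := hsub (mem_sdiff.2 ⟨hx, hxc⟩)
          rw [mem_VV] at this
          obtain ⟨j, hj⟩ := this
          exact ⟨j.succ, by simpa using hj⟩
      · intro Y
        refine le_trans (Nat.mul_le_mul_left _ (card_le_card ?_)) (hS Y)
        intro i hi
        have hi' := mem_filter.1 hi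
        refine mem_filter.2 ⟨(mem_filter.1 hi'.1).1, ?_⟩
        intro y hy
        have h1 := mem_sdiff.1 (hi'.2 hy)
        have h2 := (hφ i hi'.1).2.1 h1.1
        exact (mem_union.1 h2).resolve_left h1.2
      · have : (J.filter fun i => badP (2 ^ r) J S c i).card + J'.card = J.card :=
          card_filter_add_card_filter_not _
        rw [← this] at hJ
        nlinarith
    rw [hsum, mul_sum, ← sum_filter_add_sum_filter_not univ (fun c => c ∈ Cb)]
    have e1 : ∑ c ∈ univ.filter (fun c => c ∈ Cb), R * ((univ : Finset (Fin r → α → Fin (M + 1))).filter fun ω =>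
            ∀ i ∈ J, ¬ S i ⊆ VV (Fin.cons c ω : Fin (r + 1) → α → Fin (M + 1))).card
        ≤ β * A * X * X ^ r := by
      calc _ ≤ ∑ c ∈ univ.filter (fun c => c ∈ Cb), R * X ^ r := by
            apply sum_le_sum
            intro c _
            apply Nat.mul_le_mul_left
            rw [← hXr]
            exact card_le_univ _
        _ = (R * Cb.card) * X ^ r := by simp; ring
        _ ≤ _ := Nat.mul_le_mul_right _ hbad
    have e2 : ∑ c ∈ univ.filter (fun c => c ∉ Cb), R * ((univ : Finset (Fin r → α → Fin (M + 1))).filter fun ω =>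
            ∀ i ∈ J, ¬ S i ⊆ VV (Fin.cons c ω : Fin (r + 1) → α → Fin (M + 1))).card
        ≤ X * (r * (β * A) * X ^ r) := by
      calc _ ≤ ∑ c ∈ univ.filter (fun c => c ∉ Cb), r * (β * A) * X ^ r :=
            sum_le_sum fun c hc => hgood c (mem_filter.1 hc).2
        _ = (univ.filter (fun c => c ∉ Cb)).card * (r * (β * A) * X ^ r) := by simp
        _ ≤ _ := by
            apply Nat.mul_le_mul_right
            rw [← hXc]
            exact card_le_univ _
    calc _ ≤ β * A * X * X ^ r + X * (r * (β * A) * X ^ r) := add_le_add e1 e2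
      _ = _ := by push_cast; ring

lemma exists_flip (r : ℕ) : ∃ π : Equiv.Perm (Fin r → Fin (2 * r + 1 + 1)),
    ∀ v, (∃ j, v j = 0) → ∀ j, π v j ≠ 0 := by
  classical
  set m := 2 * r + 1 + 1 with hm
  set E : Finset (Fin r → Fin m) := univ.filter fun v => ∃ j, v j = 0 with hE
  have hcardj : ∀ j : Fin r, ((univ : Finset (Fin r → Fin m)).filter fun v => v j = 0).card * m
      = m ^ r := by
    intro j
    have : ((univ : Finset (Fin r → Fin m)).filter fun v => v j = 0)
        = Fintype.piFinset (fun i => if i = j then {0} else univ) := by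
      ext v
      simp only [mem_filter, mem_univ, true_and, Fintype.mem_piFinset]
      constructor
      · intro h i
        by_cases hi : i = j
        · subst hi; simp [h]
        · simp [hi]
      · intro h
        simpa using h j
    rw [this, Fintype.card_piFinset]
    have h1 : ∀ i : Fin r, (if i = j then ({0} : Finset (Fin m)) else univ).card
        = if i = j then 1 else m := by
      intro i; split_ifs <;> simp
    simp_rw [h1]
    have h2 : (∏ i : Fin r, if i = j then m else 1) = m := by simp
    calc _ = (∏ i : Fin r, if i = j then 1 else m) * ∏ i : Fin r, if i = j then m else 1 := by
          rw [h2]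
      _ = ∏ i : Fin r, m := by
          rw [← prod_mul_distrib]
          apply prod_congr rfl
          intro i _
          split_ifs <;> simp
      _ = _ := by simp
  have hEle : E.card * m ≤ r * m ^ r := by
    have : E ⊆ univ.biUnion fun j : Fin r => (univ : Finset (Fin r → Fin m)).filter fun v => v j = 0 := by
      intro v hv
      simpa [hE] using hv
    calc E.card * m ≤ (∑ j : Fin r, ((univ : Finset (Fin r → Fin m)).filter fun v => v j = 0).card) * m :=
          Nat.mul_le_mul_right _ ((card_le_card this).trans card_biUnion_le)
      _ = ∑ j : Fin r, m ^ r := by rw [sum_mul]; exact sum_congr rfl fun j _ => hcardj j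
      _ = _ := by simp
  have htot : E.card + Eᶜ.card = m ^ r := by
    rw [card_add_card_compl]; simp
  have hle : E.card ≤ Eᶜ.card := by
    by_contra h
    have : m ^ r < 2 * E.card := by omega
    have h3 : m * m ^ r < m * (2 * E.card) := Nat.mul_lt_mul_of_pos_left this (by omega)
    have h4 : 2 * r * m ^ r ≤ m * m ^ r := Nat.mul_le_mul_right _ (by omega)
    nlinarith
  obtain ⟨E1, hE1, hc⟩ := exists_subset_card_eq hle
  let e : {x // x ∈ E} ≃ {x // x ∈ E1} := Finset.equivOfCardEq hc.symm
  refine ⟨e.extendSubtype, fun v hv j hj => ?_⟩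
  have hvE : v ∈ E := by simpa [hE] using hv
  have h1 := e.extendSubtype_mem v hvE
  have h2 := hE1 h1
  rw [mem_compl] at h2
  exact h2 (mem_filter.2 ⟨mem_univ _, j, hj⟩)

lemma cross_fin {α ι ι' : Type*} [Fintype α] [DecidableEq α] (R r N N' : ℕ)
    (hR : 64 * (r + 1) ^ 4 ≤ R) (hN : 0 < N) (hN' : 0 < N')
    (J : Finset ι) (S : ι → Finset α) (J' : Finset ι') (S' : ι' → Finset α)
    (hK : ∀ i ∈ J, (S i).card < 2 ^ r) (hK' : ∀ i ∈ J', (S' i).card < 2 ^ r)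
    (hS : Spr R N J S) (hS' : Spr R N' J' S') (hJ : N ≤ 2 * J.card) (hJ' : N' ≤ 2 * J'.card) :
    ∃ i ∈ J, ∃ i' ∈ J', Disjoint (S i) (S' i') := by
  classical
  obtain ⟨π, hπ⟩ := exists_flip r
  have hR4 : 4 * (2 * r + 1 + 1) ^ 2 ≤ R := by
    refine le_trans ?_ hR
    have : 1 ≤ (r + 1) ^ 2 := Nat.one_le_pow _ _ (by omega)
    nlinarith
  set Ω := (univ : Finset (Fin r → α → Fin (2 * r + 1 + 1)))
  set X := (2 * r + 1 + 1) ^ Fintype.card α with hX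
  have hΩ : Ω.card = X ^ r := by
    simp [Ω, hX]
  have hXpos : 0 < X ^ r := by positivity
  have hRpos : 0 < R := by
    refine lt_of_lt_of_le ?_ hR; positivity
  have f1 := iter_lemma R N (2 * r + 1) (2 * r + 1) hR4 hN r J S hK hS (by nlinarith)
  have f2 := iter_lemma R N' (2 * r + 1) (2 * r + 1) hR4 hN' r J' S' hK' hS' (by nlinarith)
  set B1 := Ω.filter fun ω => ∀ i ∈ J, ¬ S i ⊆ VV ω with hB1
  set B2 := Ω.filter fun ω => ∀ i ∈ J', ¬ S' i ⊆ VV ω with hB2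
  have hsmall : 2 * (r * ((2 * r + 1) * (4 * (2 * r + 1 + 1) ^ 2))) < R := by
    refine lt_of_lt_of_le ?_ hR
    have : 0 < (r + 1) ^ 2 := by positivity
    nlinarith
  have half : ∀ b : ℕ, R * b ≤ r * ((2 * r + 1) * (4 * (2 * r + 1 + 1) ^ 2)) * X ^ r → 2 * b < X ^ r := by
    intro b hb
    by_contra h
    have h' : X ^ r ≤ 2 * b := not_lt.1 h
    have h1 : R * X ^ r ≤ R * (2 * b) := Nat.mul_le_mul_left _ h'
    have h2 : 2 * (r * ((2 * r + 1) * (4 * (2 * r + 1 + 1) ^ 2))) * X ^ r < R * X ^ r :=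
      Nat.mul_lt_mul_of_pos_right hsmall hXpos
    nlinarith
  have g1 := half _ f1
  have g2 := half _ f2
  let P : (Fin r → α → Fin (2 * r + 1 + 1)) → (Fin r → α → Fin (2 * r + 1 + 1)) :=
    fun ω j x => π (fun j' => ω j' x) j
  have hP : Function.Injective P := by
    intro ω ω' h
    funext j x
    have : π (fun j' => ω j' x) = π (fun j' => ω' j' x) := by
      funext j'
      exact congrFun (congrFun h j') x
    exact congrFun (π.injective this) j
  set B3 := Ω.filter fun ω => P ω ∈ B2 with hB3
  have g3 : B3.card ≤ B2.card :=
    card_le_card_of_injOn P (fun ω hω => (mem_filter.1 hω).2) hP.injOn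
  have : (B1 ∪ B3).card < Ω.card := by
    rw [hΩ]
    have := card_union_le B1 B3
    omega
  obtain ⟨ω, hω, hω'⟩ := exists_mem_notMem_of_card_lt_card this
  have n1 : ω ∉ B1 := fun h => hω' (mem_union_left _ h)
  have n3 : ω ∉ B3 := fun h => hω' (mem_union_right _ h)
  have m1 : ∃ i ∈ J, S i ⊆ VV ω := by
    by_contra h
    push Not at h
    exact n1 (mem_filter.2 ⟨hω, h⟩)
  have m2 : ∃ i ∈ J', S' i ⊆ VV (P ω) := by
    by_contra h
    push Not at h
    exact n3 (mem_filter.2 ⟨hω, mem_filter.2 ⟨mem_univ _, h⟩⟩)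
  obtain ⟨i, hi, hsi⟩ := m1
  obtain ⟨i', hi', hsi'⟩ := m2
  refine ⟨i, hi, i', hi', disjoint_left.2 fun x hx hx' => ?_⟩
  have a1 := (mem_VV _ _).1 (hsi hx)
  obtain ⟨j, hj⟩ := (mem_VV _ _).1 (hsi' hx')
  exact hπ (fun j' => ω j' x) a1 j hj

/-- Spread families of subsets of ℕ: there are two disjoint members. -/
lemma cross_nat {ι ι' : Type*} (R r N N' : ℕ) (U : Finset ℕ)
    (hR : 64 * (r + 1) ^ 4 ≤ R) (hN : 0 < N) (hN' : 0 < N')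
    (J : Finset ι) (S : ι → Finset ℕ) (J' : Finset ι') (S' : ι' → Finset ℕ)
    (hU : ∀ i ∈ J, S i ⊆ U)
    (hK : ∀ i ∈ J, (S i).card < 2 ^ r) (hK' : ∀ i ∈ J', (S' i).card < 2 ^ r)
    (hS : Spr R N J S) (hS' : Spr R N' J' S') (hJ : N ≤ 2 * J.card) (hJ' : N' ≤ 2 * J'.card) :
    ∃ i ∈ J, ∃ i' ∈ J', Disjoint (S i) (S' i') := by
  classical
  have hsp : ∀ {κ : Type _} (N : ℕ) (J : Finset κ) (S : κ → Finset ℕ), Spr R N J S →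
      Spr R N J (fun i => (S i).subtype (· ∈ U)) := by
    intro κ N J S h Y
    have := h (Y.map (Function.Embedding.subtype _))
    rw [card_map] at this
    refine le_trans (Nat.mul_le_mul_left _ (card_le_card ?_)) this
    intro i hi
    rw [mem_filter] at hi ⊢
    refine ⟨hi.1, ?_⟩
    intro y hy
    rw [mem_map] at hy
    obtain ⟨z, hz, rfl⟩ := hy
    have := hi.2 hz
    simpa using this
  have hcd : ∀ T : Finset ℕ, (T.subtype (· ∈ U)).card ≤ T.card := by
    intro T
    rw [card_subtype]
    exact card_filter_le _ _
  have hsp2 : Spr R N' J' (fun i => (S' i).subtype (· ∈ U)) := by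
    intro Y
    have := hS' (Y.map (Function.Embedding.subtype _))
    rw [card_map] at this
    refine le_trans (Nat.mul_le_mul_left _ (card_le_card ?_)) this
    intro i hi
    rw [mem_filter] at hi ⊢
    refine ⟨hi.1, ?_⟩
    intro y hy
    rw [mem_map] at hy
    obtain ⟨z, hz, rfl⟩ := hy
    have := hi.2 hz
    simpa using this
  obtain ⟨i, hi, i', hi', hd⟩ := cross_fin (α := ↥U) R r N N' hR hN hN' J _ J' _
    (fun i hi => (hcd (S i)).trans_lt (hK i hi)) (fun i hi => (hcd (S' i)).trans_lt (hK' i hi))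
    (hsp N J S hS) hsp2 hJ hJ'
  refine ⟨i, hi, i', hi', disjoint_left.2 fun x hx hx' => ?_⟩
  have hxU := hU i hi hx
  have k1 : (⟨x, hxU⟩ : ↥U) ∈ (S i).subtype (· ∈ U) := by simpa using hx
  have k2 : (⟨x, hxU⟩ : ↥U) ∈ (S' i').subtype (· ∈ U) := by simpa using hx'
  exact disjoint_left.1 hd k1 k2

/-- `𝓖` consists of sets containing `B`, and its link at `B` is `R`-spread. -/
def SprOver (R : ℕ) (B : Finset ℕ) (G : Finset (Finset ℕ)) : Prop :=
  G.Nonempty ∧ (∀ A ∈ G, B ⊆ A) ∧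
    ∀ Y : Finset ℕ, Disjoint Y B → R ^ Y.card * (G.filter fun A => Y ⊆ A).card ≤ G.card

lemma exists_sprOver (R : ℕ) (hR : 1 ≤ R) (G : Finset (Finset ℕ)) (hG : G.Nonempty) :
    ∃ B : Finset ℕ, SprOver R B (G.filter fun A => B ⊆ A) ∧
      G.card ≤ R ^ B.card * (G.filter fun A => B ⊆ A).card := by
  classical
  set cand := (G.biUnion powerset).filter fun B =>
    G.card ≤ R ^ B.card * (G.filter fun A => B ⊆ A).card with hcand
  have hne : cand.Nonempty := by
    obtain ⟨A, hA⟩ := hG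
    refine ⟨∅, ?_⟩
    rw [hcand, mem_filter, mem_biUnion]
    refine ⟨⟨A, hA, by simp⟩, by simp⟩
  obtain ⟨B, hB, hmax⟩ := exists_max_image cand card hne
  have hB' := mem_filter.1 hB
  obtain ⟨A, hA, hBA⟩ := mem_biUnion.1 hB'.1
  rw [mem_powerset] at hBA
  refine ⟨B, ⟨⟨A, mem_filter.2 ⟨hA, hBA⟩⟩, fun A hA => (mem_filter.1 hA).2, ?_⟩, hB'.2⟩
  intro Y hY
  by_cases hY0 : Y = ∅
  · subst hY0; simp
  have hfil : ((G.filter fun A => B ⊆ A).filter fun A => Y ⊆ A) = G.filter fun A => B ∪ Y ⊆ A := by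
    rw [filter_filter]
    apply filter_congr
    intro A _
    rw [union_subset_iff]
  rw [hfil]
  have hcard : (B ∪ Y).card = B.card + Y.card := card_union_of_disjoint hY.symm
  have hYpos : 0 < Y.card := card_pos.2 (nonempty_iff_ne_empty.2 hY0)
  have hnot : B ∪ Y ∉ cand := by
    intro h
    have := hmax _ h
    omega
  by_cases hsome : ∃ A ∈ G, B ∪ Y ⊆ A
  · obtain ⟨A', hA', hsub⟩ := hsome
    have hlt : R ^ (B ∪ Y).card * (G.filter fun A => B ∪ Y ⊆ A).card < G.card := by
      by_contra h
      exact hnot (mem_filter.2 ⟨mem_biUnion.2 ⟨A', hA', mem_powerset.2 hsub⟩, not_lt.1 h⟩)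
    rw [hcard, pow_add, mul_assoc] at hlt
    have := hlt.le.trans hB'.2
    exact Nat.le_of_mul_le_mul_left this (by positivity)
  · have : (G.filter fun A => B ∪ Y ⊆ A) = ∅ := by
      apply filter_false_of_mem
      intro A hA h
      exact hsome ⟨A, hA, h⟩
    rw [this]; simp

lemma sprOver_link {R : ℕ} {B : Finset ℕ} {G : Finset (Finset ℕ)} (h : SprOver R B G)
    (J : Finset (Finset ℕ)) (hJ : J ⊆ G) : Spr R G.card J (fun A => A \ B) := by
  classical
  intro Y
  by_cases hY : Disjoint Y B
  · refine le_trans (Nat.mul_le_mul_left _ (card_le_card ?_)) (h.2.2 Y hY)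
    intro A hA
    rw [mem_filter] at hA ⊢
    exact ⟨hJ hA.1, hA.2.trans sdiff_subset⟩
  · have : (J.filter fun A => Y ⊆ A \ B) = ∅ := by
      apply filter_false_of_mem
      intro A _ hA
      exact hY (disjoint_of_subset_left hA sdiff_disjoint)
    rw [this]; simp

lemma sprOver_avoid {R q : ℕ} {B : Finset ℕ} {G : Finset (Finset ℕ)} (h : SprOver R B G)
    (C : Finset ℕ) (hC : C.card ≤ q) (hq : 2 * q ≤ R) (hR : 1 ≤ R) :
    G.card ≤ 2 * (G.filter fun A => Disjoint A (C \ B)).card := by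
  classical
  have h1 : (G.filter fun A => ¬ Disjoint A (C \ B)) ⊆
      (C \ B).biUnion fun x => G.filter fun A => {x} ⊆ A := by
    intro A hA
    rw [mem_filter, not_disjoint_iff] at hA
    obtain ⟨hA, x, hx, hx'⟩ := hA
    exact mem_biUnion.2 ⟨x, hx', mem_filter.2 ⟨hA, by simpa using hx⟩⟩
  have h2 : R * (G.filter fun A => ¬ Disjoint A (C \ B)).card ≤ q * G.card := by
    calc R * (G.filter fun A => ¬ Disjoint A (C \ B)).card
        ≤ R * ∑ x ∈ C \ B, (G.filter fun A => {x} ⊆ A).card :=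
          Nat.mul_le_mul_left _ ((card_le_card h1).trans card_biUnion_le)
      _ = ∑ x ∈ C \ B, R * (G.filter fun A => {x} ⊆ A).card := by rw [mul_sum]
      _ ≤ ∑ x ∈ C \ B, G.card := by
          apply sum_le_sum
          intro x hx
          have := h.2.2 {x} (by simpa using (mem_sdiff.1 hx).2)
          simpa using this
      _ = (C \ B).card * G.card := by simp
      _ ≤ q * G.card := Nat.mul_le_mul_right _ ((card_le_card sdiff_subset).trans hC)
  have h3 : (G.filter fun A => Disjoint A (C \ B)).card + (G.filter fun A => ¬ Disjoint A (C \ B)).card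
      = G.card := card_filter_add_card_filter_not _
  have h4 : R * (2 * (G.filter fun A => ¬ Disjoint A (C \ B)).card) ≤ R * G.card := by
    have : 2 * q * G.card ≤ R * G.card := Nat.mul_le_mul_right _ hq
    nlinarith
  have h5 := Nat.le_of_mul_le_mul_left h4 (by omega)
  omega

lemma kernels_inter {R q r t : ℕ} {U : Finset ℕ} {F : Finset (Finset ℕ)}
    (hR : 64 * (r + 1) ^ 4 ≤ R) (hq : 2 * q ≤ R)
    (hF : ∀ A ∈ F, A ⊆ U ∧ A.card < 2 ^ r) (ht : ∀ A ∈ F, ∀ B ∈ F, t ≤ (A ∩ B).card)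
    {B C : Finset ℕ} {G H : Finset (Finset ℕ)} (hGF : G ⊆ F) (hHF : H ⊆ F)
    (hG : SprOver R B G) (hH : SprOver R C H) (hB : B.card ≤ q) (hC : C.card ≤ q) :
    t ≤ (B ∩ C).card := by
  classical
  have hR1 : 1 ≤ R := le_trans (by nlinarith [Nat.one_le_pow 4 (r + 1) (by omega)]) hR
  have g1 := sprOver_avoid hG C hC hq hR1
  have g2 := sprOver_avoid hH B hB hq hR1
  have lt1 : ∀ A ∈ F, ∀ B, (A \ B).card < 2 ^ r := fun A hA B =>
    lt_of_le_of_lt (card_le_card sdiff_subset) (hF A hA).2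
  obtain ⟨A, hA, A', hA', hd⟩ := cross_nat R r G.card H.card U hR
    (card_pos.2 hG.1) (card_pos.2 hH.1)
    (G.filter fun A => Disjoint A (C \ B)) (fun A => A \ B)
    (H.filter fun A => Disjoint A (B \ C)) (fun A => A \ C)
    (fun A hA => sdiff_subset.trans (hF A (hGF (mem_filter.1 hA).1)).1)
    (fun A hA => lt1 A (hGF (mem_filter.1 hA).1) B)
    (fun A hA => lt1 A (hHF (mem_filter.1 hA).1) C)
    (sprOver_link hG _ (filter_subset _ _)) (sprOver_link hH _ (filter_subset _ _)) g1 g2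
  rw [mem_filter] at hA hA'
  refine (ht A (hGF hA.1) A' (hHF hA'.1)).trans (card_le_card ?_)
  intro x hx
  rw [mem_inter] at hx ⊢
  have d1 := disjoint_left.1 hA.2 hx.1
  have d2 := disjoint_left.1 hA'.2 hx.2
  have d3 : x ∈ A \ B → x ∉ A' \ C := fun h => disjoint_left.1 hd h
  simp only [mem_sdiff] at d1 d2 d3
  tauto

lemma card_filter_superset_le {n k : ℕ} {U : Finset ℕ} (hU : U.card = n) (G : Finset (Finset ℕ))
    (hG : G ⊆ powersetCard k U) (B : Finset ℕ) (hB : B ⊆ U) :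
    (G.filter fun A => B ⊆ A).card ≤ (n - B.card).choose (k - B.card) := by
  classical
  have : (n - B.card).choose (k - B.card) = (powersetCard (k - B.card) (U \ B)).card := by
    rw [card_powersetCard, card_sdiff_of_subset hB, hU]
  rw [this]
  apply card_le_card_of_injOn (fun A => A \ B)
  · intro A hA
    rw [mem_coe, mem_filter] at hA
    have := mem_powersetCard.1 (hG hA.1)
    rw [mem_coe, mem_powersetCard, card_sdiff_of_subset hA.2, this.2]
    exact ⟨sdiff_subset_sdiff this.1 (Subset.refl _), rfl⟩
  · intro A hA A' hA' h
    rw [mem_coe, mem_filter] at hA hA'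
    have h' : A \ B = A' \ B := h
    rw [← sdiff_union_of_subset hA.2, ← sdiff_union_of_subset hA'.2, h']

lemma choose_ratio (R : ℕ) (hR : 1 ≤ R) : ∀ (b n k : ℕ), b ≤ k → R ^ 2 * k ≤ n →
    R ^ (2 * b) * (n - b).choose (k - b) ≤ n.choose k := by
  intro b
  induction b with
  | zero => intro n k _ _; simp
  | succ b ih =>
    intro n k hb hn
    obtain ⟨k, rfl⟩ : ∃ k', k = k' + 1 := ⟨k - 1, by omega⟩
    have hR2 : 1 ≤ R ^ 2 := Nat.one_le_pow _ _ hR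
    obtain ⟨n, rfl⟩ : ∃ n', n = n' + 1 := ⟨n - 1, by nlinarith [Nat.sub_add_cancel (show 1 ≤ n by nlinarith)]⟩
    have h1 := ih n k (by omega) (by nlinarith)
    have h2 := Nat.add_one_mul_choose_eq n k
    have h3 : R ^ 2 * n.choose k ≤ (n + 1).choose (k + 1) := by
      have : (k + 1) * (R ^ 2 * n.choose k) ≤ (k + 1) * (n + 1).choose (k + 1) := by
        nlinarith [Nat.mul_le_mul_right (n.choose k) hn]
      exact Nat.le_of_mul_le_mul_left this (by omega)
    have e1 : n + 1 - (b + 1) = n - b := by omega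
    have e2 : k + 1 - (b + 1) = k - b := by omega
    rw [e1, e2]
    calc R ^ (2 * (b + 1)) * (n - b).choose (k - b)
        = R ^ 2 * (R ^ (2 * b) * (n - b).choose (k - b)) := by ring
      _ ≤ R ^ 2 * n.choose k := Nat.mul_le_mul_left _ h1
      _ ≤ _ := h3

open Classical in
/-- Kernels of size at most `q`. -/
noncomputable def kern (R q : ℕ) (U : Finset ℕ) (F : Finset (Finset ℕ)) : Finset (Finset ℕ) :=
  U.powerset.filter fun B => B.card ≤ q ∧ ∃ G ⊆ F, SprOver R B G

open Classical in
lemma mem_kern {R q : ℕ} {U : Finset ℕ} {F : Finset (Finset ℕ)} {B : Finset ℕ} :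
    B ∈ kern R q U F ↔ B ⊆ U ∧ B.card ≤ q ∧ ∃ G ⊆ F, SprOver R B G := by
  unfold kern
  rw [mem_filter, mem_powerset]

/-- A subfamily without small kernels is small. -/
lemma no_kernel_small {R q n k : ℕ} {U : Finset ℕ} (hU : U.card = n) (hR : 1 ≤ R)
    (hn : R ^ 2 * k ≤ n) {F : Finset (Finset ℕ)} (hF : F ⊆ powersetCard k U)
    (G : Finset (Finset ℕ)) (hGF : G ⊆ F) (hG : G.Nonempty)
    (hno : ∀ A ∈ G, ∀ B ∈ kern R q U F, ¬ B ⊆ A) :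
    ∃ B : Finset ℕ, B ⊆ U ∧ q < B.card ∧ B.card ≤ k ∧ SprOver R B (G.filter fun A => B ⊆ A) ∧
      G.card ≤ R ^ B.card * (n - B.card).choose (k - B.card) ∧
      R ^ (q + 1) * G.card ≤ n.choose k := by
  obtain ⟨B, hB, hc⟩ := exists_sprOver R hR G hG
  obtain ⟨A, hA⟩ := hB.1
  have hA' := mem_filter.1 hA
  have hAU := mem_powersetCard.1 (hF (hGF hA'.1))
  have hBU : B ⊆ U := hA'.2.trans hAU.1
  have hBk : B.card ≤ k := by rw [← hAU.2]; exact card_le_card hA'.2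
  have hq : q < B.card := by
    by_contra h
    refine hno A hA'.1 B ?_ hA'.2
    rw [mem_kern]
    exact ⟨hBU, not_lt.1 h, _, (filter_subset _ _).trans hGF, hB⟩
  have h1 := hc.trans (Nat.mul_le_mul_left _ (card_filter_superset_le hU G (hGF.trans hF) B hBU))
  refine ⟨B, hBU, hq, hBk, hB, h1, ?_⟩
  calc R ^ (q + 1) * G.card ≤ R ^ B.card * (R ^ B.card * (n - B.card).choose (k - B.card)) := by
        apply Nat.mul_le_mul (Nat.pow_le_pow_right hR hq) h1
    _ = R ^ (2 * B.card) * (n - B.card).choose (k - B.card) := by ring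
    _ ≤ _ := choose_ratio R hR _ _ _ hBk hn

lemma exists_maximal_tint (t q : ℕ) (U : Finset ℕ) (K : Finset (Finset ℕ))
    (hK : ∀ B ∈ K, B ⊆ U ∧ B.card ≤ q) (hK' : ∀ B ∈ K, ∀ C ∈ K, t ≤ (B ∩ C).card) :
    ∃ S : Finset (Finset ℕ), K ⊆ S ∧ (∀ B ∈ S, B ⊆ U ∧ B.card ≤ q) ∧
      (∀ B ∈ S, ∀ C ∈ S, t ≤ (B ∩ C).card) ∧
      ∀ T ⊆ U, T.card ≤ q → t ≤ T.card → T ∉ S → ∃ B ∈ S, (T ∩ B).card < t := by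
  classical
  set cand := U.powerset.powerset.filter fun S : Finset (Finset ℕ) => K ⊆ S ∧
    (∀ B ∈ S, B.card ≤ q) ∧ ∀ B ∈ S, ∀ C ∈ S, t ≤ (B ∩ C).card with hc
  have hne : cand.Nonempty := by
    refine ⟨K, mem_filter.2 ⟨?_, Subset.refl _, fun B hB => (hK B hB).2, hK'⟩⟩
    rw [mem_powerset]
    intro B hB
    exact mem_powerset.2 (hK B hB).1
  obtain ⟨S, hS, hmax⟩ := exists_max_image cand card hne
  obtain ⟨h1, h2, h3, h4⟩ := mem_filter.1 hS
  rw [mem_powerset] at h1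
  refine ⟨S, h2, fun B hB => ⟨mem_powerset.1 (h1 hB), h3 B hB⟩, h4, ?_⟩
  intro T hT hTq hTt hTS
  by_contra hcon
  push Not at hcon
  have : insert T S ∈ cand := by
    refine mem_filter.2 ⟨?_, h2.trans (subset_insert _ _), ?_, ?_⟩
    · rw [mem_powerset]
      intro B hB
      rcases mem_insert.1 hB with rfl | hB
      · exact mem_powerset.2 hT
      · exact h1 hB
    · intro B hB
      rcases mem_insert.1 hB with rfl | hB
      · exact hTq
      · exact h3 B hB
    · intro B hB C hC
      rcases mem_insert.1 hB with hB | hB <;> rcases mem_insert.1 hC with hC | hC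
      · rw [hB, hC, inter_self]; exact hTt
      · rw [hB]; exact hcon C hC
      · rw [hC, inter_comm]; exact hcon B hB
      · exact h4 B hB C hC
  have := hmax _ this
  rw [card_insert_of_notMem hTS] at this
  omega

/-- Inclusion-minimal members. -/
def mins (S : Finset (Finset ℕ)) : Finset (Finset ℕ) :=
  S.filter fun B => ∀ T ∈ S, T ⊆ B → T = B

lemma exists_mins {S : Finset (Finset ℕ)} {B : Finset ℕ} (hB : B ∈ S) :
    ∃ M ∈ mins S, M ⊆ B := by
  classical
  obtain ⟨M, hM, hmin⟩ := exists_min_image (S.filter fun T => T ⊆ B) card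
    ⟨B, mem_filter.2 ⟨hB, Subset.refl _⟩⟩
  rw [mem_filter] at hM
  refine ⟨M, mem_filter.2 ⟨hM.1, fun T hT hTM => ?_⟩, hM.2⟩
  exact eq_of_subset_of_card_le hTM (hmin T (mem_filter.2 ⟨hT, hTM.trans hM.2⟩))

lemma mins_branch {t q : ℕ} {U : Finset ℕ} {S : Finset (Finset ℕ)}
    (h1 : ∀ B ∈ S, B ⊆ U ∧ B.card ≤ q) (h2 : ∀ B ∈ S, ∀ C ∈ S, t ≤ (B ∩ C).card)
    (h3 : ∀ T ⊆ U, T.card ≤ q → t ≤ T.card → T ∉ S → ∃ B ∈ S, (T ∩ B).card < t) :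
    ∀ (j : ℕ) (T : Finset ℕ),
      ((mins S).filter fun M => T ⊆ M ∧ M.card = T.card + j).card ≤ q ^ j := by
  classical
  intro j
  induction j with
  | zero =>
    intro T
    rw [pow_zero, card_le_one]
    intro a ha b hb
    rw [mem_filter] at ha hb
    rw [← eq_of_subset_of_card_le ha.2.1 (by omega), ← eq_of_subset_of_card_le hb.2.1 (by omega)]
  | succ j ih =>
    intro T
    by_cases hne : ((mins S).filter fun M => T ⊆ M ∧ M.card = T.card + (j + 1)).Nonempty
    swap
    · rw [not_nonempty_iff_eq_empty.1 hne]; simp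
    obtain ⟨M, hM⟩ := hne
    obtain ⟨hM, hTM, hMc⟩ := mem_filter.1 hM
    obtain ⟨hMS, hMmin⟩ := mem_filter.1 hM
    have hTS : T ∉ S := by
      intro h
      have := hMmin T h hTM
      rw [this] at hMc
      omega
    have hB : ∃ B ∈ S, (T ∩ B).card < t := by
      by_cases htT : t ≤ T.card
      · exact h3 T (hTM.trans (h1 M hMS).1) ((card_le_card hTM).trans (h1 M hMS).2) htT hTS
      · exact ⟨M, hMS, lt_of_le_of_lt (card_le_card inter_subset_left) (by omega)⟩
    obtain ⟨B, hB, hTB⟩ := hB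
    have hsub : ((mins S).filter fun M => T ⊆ M ∧ M.card = T.card + (j + 1)) ⊆
        (B \ T).biUnion fun x =>
          (mins S).filter fun M => insert x T ⊆ M ∧ M.card = (insert x T).card + j := by
      intro N hN
      obtain ⟨hN, hTN, hNc⟩ := mem_filter.1 hN
      have hNB := h2 N (mem_filter.1 hN).1 B hB
      have : ∃ x ∈ N ∩ B, x ∉ T ∩ B := by
        by_contra hcon
        push Not at hcon
        have := card_le_card (show N ∩ B ⊆ T ∩ B from hcon)
        omega
      obtain ⟨x, hx, hx'⟩ := this
      rw [mem_inter] at hx hx'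
      have hxT : x ∉ T := fun h => hx' ⟨h, hx.2⟩
      refine mem_biUnion.2 ⟨x, mem_sdiff.2 ⟨hx.2, hxT⟩, mem_filter.2 ⟨hN, ?_, ?_⟩⟩
      · exact insert_subset hx.1 hTN
      · rw [card_insert_of_notMem hxT]; omega
    calc _ ≤ ∑ x ∈ B \ T, q ^ j :=
          (card_le_card hsub).trans (card_biUnion_le.trans (sum_le_sum fun x _ => ih _))
      _ = (B \ T).card * q ^ j := by simp
      _ ≤ q * q ^ j := Nat.mul_le_mul_right _ ((card_le_card sdiff_subset).trans (h1 B hB).2)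
      _ = q ^ (j + 1) := by ring

lemma mins_card {t q : ℕ} {U : Finset ℕ} {S : Finset (Finset ℕ)} (hq : 1 ≤ q)
    (h1 : ∀ B ∈ S, B ⊆ U ∧ B.card ≤ q) (h2 : ∀ B ∈ S, ∀ C ∈ S, t ≤ (B ∩ C).card)
    (h3 : ∀ T ⊆ U, T.card ≤ q → t ≤ T.card → T ∉ S → ∃ B ∈ S, (T ∩ B).card < t) :
    (mins S).card ≤ (q + 1) * q ^ q := by
  classical
  have hsub : mins S ⊆ (range (q + 1)).biUnion fun j =>
      (mins S).filter fun M => (∅ : Finset ℕ) ⊆ M ∧ M.card = (∅ : Finset ℕ).card + j := by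
    intro M hM
    refine mem_biUnion.2 ⟨M.card, ?_, mem_filter.2 ⟨hM, by simp, by simp⟩⟩
    rw [mem_range]
    have := (h1 M (mem_filter.1 hM).1).2
    omega
  calc _ ≤ ∑ j ∈ range (q + 1), q ^ q :=
        (card_le_card hsub).trans (card_biUnion_le.trans (sum_le_sum fun j hj =>
          (mins_branch h1 h2 h3 j ∅).trans
            (Nat.pow_le_pow_right hq (by rw [mem_range] at hj; omega))))
    _ = _ := by simp

/-- The `t`-element intersections of members of size at most `t+1`. -/
def dset (t : ℕ) (M : Finset (Finset ℕ)) : Finset (Finset ℕ) :=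
  (((M ×ˢ M).filter fun p => p.1.card ≤ t + 1 ∧ p.2.card ≤ t + 1).image
    fun p => p.1 ∩ p.2).filter fun D => D.card = t

lemma mem_dset {t : ℕ} {M : Finset (Finset ℕ)} {D : Finset ℕ} :
    D ∈ dset t M ↔ (∃ A ∈ M, ∃ B ∈ M, A.card ≤ t + 1 ∧ B.card ≤ t + 1 ∧ A ∩ B = D) ∧
      D.card = t := by
  unfold dset
  rw [mem_filter, mem_image]
  constructor
  · rintro ⟨⟨⟨A, B⟩, h, rfl⟩, h'⟩
    rw [mem_filter, mem_product] at h
    exact ⟨⟨A, h.1.1, B, h.1.2, h.2.1, h.2.2, rfl⟩, h'⟩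
  · rintro ⟨⟨A, hA, B, hB, h1, h2, rfl⟩, h'⟩
    exact ⟨⟨⟨A, B⟩, mem_filter.2 ⟨mem_product.2 ⟨hA, hB⟩, h1, h2⟩, rfl⟩, h'⟩

lemma dset_classify {t : ℕ} (ht : 1 ≤ t) {U : Finset ℕ} {M : Finset (Finset ℕ)}
    (hU : ∀ A ∈ M, A ⊆ U) (h2 : ∀ B ∈ M, ∀ C ∈ M, t ≤ (B ∩ C).card)
    (hanti : ∀ B ∈ M, ∀ C ∈ M, B ⊆ C → B = C) :
    (dset t M).card + 1 ≤ (t + 2).choose 2 ∨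
      ∃ Z ⊆ U, Z.card = t + 2 ∧ ∀ T ⊆ Z, T.card = t + 1 → T ∈ M := by
  classical
  have hb : 3 ≤ (t + 2).choose 2 := by
    have := Nat.choose_le_choose 2 (show 3 ≤ t + 2 by omega)
    simpa using this
  by_cases h1 : (dset t M).card ≤ 1
  · left; omega
  have hne : (dset t M).Nonempty := card_pos.1 (by omega)
  have hge : ∀ A ∈ M, t ≤ A.card := fun A hA => by simpa using h2 A hA A hA
  -- no member of size t
  have hns : ∀ A ∈ M, t + 1 ≤ A.card := by
    intro A hA
    by_contra hcon
    have hAt : A.card = t := le_antisymm (by omega) (hge A hA)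
    apply h1
    rw [card_le_one]
    have key : ∀ D ∈ dset t M, D = A := by
      intro D hD
      obtain ⟨⟨B, hB, C, hC, -, -, rfl⟩, -⟩ := mem_dset.1 hD
      have : ∀ B ∈ M, A = B := by
        intro B hB
        apply hanti A hA B hB
        have := h2 A hA B hB
        have := eq_of_subset_of_card_le (inter_subset_left : A ∩ B ⊆ A) (by omega)
        rw [← this]; exact inter_subset_right
      rw [← this B hB, ← this C hC, inter_self]
    intro a ha b hb
    rw [key a ha, key b hb]
  obtain ⟨D, hD⟩ := hne
  obtain ⟨⟨A, hA, B, hB, hAc, hBc, hAB⟩, hDc⟩ := mem_dset.1 hD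
  have hA1 : A.card = t + 1 := le_antisymm hAc (hns A hA)
  have hB1 : B.card = t + 1 := le_antisymm hBc (hns B hB)
  have hZ : (A ∪ B).card = t + 2 := by
    have := card_union_add_card_inter A B
    rw [hAB] at this
    omega
  by_cases hall : ∀ N ∈ M, N.card ≤ t + 1 → N ⊆ A ∪ B
  · by_cases hfull : ∀ T ⊆ A ∪ B, T.card = t + 1 → T ∈ M
    · exact Or.inr ⟨A ∪ B, union_subset (hU A hA) (hU B hB), hZ, hfull⟩
    left
    push Not at hfull
    obtain ⟨T, hTZ, hTc, hTM⟩ := hfull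
    obtain ⟨E, hET, hEc⟩ := exists_subset_card_eq (show t ≤ T.card by omega)
    have hE : E ∉ dset t M := by
      intro hE
      obtain ⟨⟨N, hN, N', hN', hNc, hNc', hNN⟩, -⟩ := mem_dset.1 hE
      have hN1 : N.card = t + 1 := le_antisymm hNc (hns N hN)
      have hN1' : N'.card = t + 1 := le_antisymm hNc' (hns N' hN')
      have hu : N ∪ N' = A ∪ B := by
        apply eq_of_subset_of_card_le (union_subset (hall N hN hNc) (hall N' hN' hNc'))
        have := card_union_add_card_inter N N'
        rw [hNN] at this
        omega
      obtain ⟨z, hzT, hzE⟩ := exists_mem_notMem_of_card_lt_card (show E.card < T.card by omega)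
      have hins : insert z E = T := by
        apply eq_of_subset_of_card_le (insert_subset hzT hET)
        rw [card_insert_of_notMem hzE]; omega
      have hz : z ∈ N ∪ N' := by rw [hu]; exact hTZ hzT
      rcases mem_union.1 hz with hz | hz
      · have : T = N := by
          apply eq_of_subset_of_card_le _ (by omega)
          rw [← hins, ← hNN]
          exact insert_subset hz inter_subset_left
        exact hTM (this ▸ hN)
      · have : T = N' := by
          apply eq_of_subset_of_card_le _ (by omega)
          rw [← hins, ← hNN]
          exact insert_subset hz inter_subset_right
        exact hTM (this ▸ hN')
    have hss : dset t M ⊂ powersetCard t (A ∪ B) := by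
      rw [ssubset_iff_of_subset]
      · exact ⟨E, mem_powersetCard.2 ⟨hET.trans hTZ, hEc⟩, hE⟩
      · intro D hD
        obtain ⟨⟨N, hN, N', hN', hNc, hNc', hNN⟩, hDc⟩ := mem_dset.1 hD
        exact mem_powersetCard.2 ⟨by rw [← hNN]; exact inter_subset_left.trans (hall N hN hNc), hDc⟩
    have := card_lt_card hss
    rw [card_powersetCard, hZ, ← Nat.choose_symm (by omega : t ≤ t + 2)] at this
    have e : t + 2 - t = 2 := by omega
    rw [e] at this
    omega
  · exfalso
    push Not at hall
    -- any member not inside A ∪ B contains D and meets the union exactly in D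
    have hout : ∀ N ∈ M, N.card ≤ t + 1 → ¬ N ⊆ A ∪ B → N ∩ (A ∪ B) = D := by
      intro N hN hNc hNZ
      have hlt : (N ∩ (A ∪ B)).card ≤ t := by
        have : N ∩ (A ∪ B) ⊂ N := by
          rw [ssubset_iff_of_subset inter_subset_left]
          obtain ⟨x, hx, hx'⟩ := not_subset.1 hNZ
          exact ⟨x, hx, fun h => hx' (mem_inter.1 h).2⟩
        have := card_lt_card this
        omega
      have e1 : N ∩ A = N ∩ (A ∪ B) := by
        apply eq_of_subset_of_card_le (inter_subset_inter_left subset_union_left)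
        have := h2 N hN A hA
        omega
      have e2 : N ∩ B = N ∩ (A ∪ B) := by
        apply eq_of_subset_of_card_le (inter_subset_inter_left subset_union_right)
        have := h2 N hN B hB
        omega
      apply eq_of_subset_of_card_le
      · rw [← hAB]
        apply subset_inter
        · rw [← e1]; exact inter_subset_right
        · rw [← e2]; exact inter_subset_right
      · rw [hDc, ← e1]; exact h2 N hN A hA
    obtain ⟨N, hN, hNc, hNZ⟩ := hall
    have hND := hout N hN hNc hNZ
    have hcont : ∀ L ∈ M, L.card ≤ t + 1 → D ⊆ L := by
      intro L hL hLc
      by_cases hLZ : L ⊆ A ∪ B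
      · have : L ∩ N ⊆ D := by
          rw [← hND]
          intro x hx
          rw [mem_inter] at hx ⊢
          exact ⟨hx.2, hLZ hx.1⟩
        have h := eq_of_subset_of_card_le this (by rw [hDc]; exact h2 L hL N hN)
        rw [← h]; exact inter_subset_left
      · rw [← hout L hL hLc hLZ]; exact inter_subset_left
    apply h1
    rw [card_le_one]
    have key : ∀ E ∈ dset t M, E = D := by
      intro E hE
      obtain ⟨⟨P, hP, Q, hQ, hPc, hQc, hPQ⟩, hEc⟩ := mem_dset.1 hE
      symm
      apply eq_of_subset_of_card_le _ (by omega)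
      rw [← hPQ]
      exact subset_inter (hcont P hP hPc) (hcont Q hQ hQc)
    intro a ha b hb
    rw [key a ha, key b hb]

/-- Subsets of `U` of size at most `i`. -/
def subs (U : Finset ℕ) (i : ℕ) : Finset (Finset ℕ) := U.powerset.filter fun S => S.card ≤ i

lemma mem_subs {U : Finset ℕ} {i : ℕ} {S : Finset ℕ} : S ∈ subs U i ↔ S ⊆ U ∧ S.card ≤ i := by
  unfold subs; rw [mem_filter, mem_powerset]

lemma mem_interFam {F : Finset (Finset ℕ)} {I : Finset ℕ} :
    I ∈ interFam F ↔ ∃ A ∈ F, ∃ B ∈ F, A ≠ B ∧ A ∩ B = I := by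
  unfold interFam
  rw [mem_image]
  constructor
  · rintro ⟨⟨A, B⟩, h, rfl⟩
    rw [mem_filter, mem_product] at h
    exact ⟨A, h.1.1, B, h.1.2, h.2, rfl⟩
  · rintro ⟨A, hA, B, hB, h, rfl⟩
    exact ⟨⟨A, B⟩, mem_filter.2 ⟨mem_product.2 ⟨hA, hB⟩, h⟩, rfl⟩

lemma card_subs_eq (U : Finset ℕ) (i : ℕ) :
    (subs U i).card = ∑ j ∈ range (i + 1), U.card.choose j := by
  classical
  have : subs U i = (range (i + 1)).biUnion fun j => powersetCard j U := by
    ext S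
    simp only [mem_subs, mem_biUnion, mem_range, mem_powersetCard]
    constructor
    · rintro ⟨h1, h2⟩; exact ⟨S.card, by omega, h1, rfl⟩
    · rintro ⟨j, hj, h1, h2⟩; exact ⟨h1, by omega⟩
  rw [this, card_biUnion]
  · simp
  · intro i _ j _ hij
    rw [Function.onFun, disjoint_left]
    intro S h1 h2
    rw [mem_powersetCard] at h1 h2
    exact hij (h1.2.symm.trans h2.2)

lemma card_subs_le_pow (U : Finset ℕ) (i : ℕ) : (subs U i).card ≤ (U.card + 1) ^ i := by
  rw [card_subs_eq, add_pow]
  apply sum_le_sum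
  intro j hj
  rw [mem_range] at hj
  have h1 := Nat.choose_le_pow U.card j
  have h2 : 1 ≤ i.choose j := Nat.choose_pos (by omega)
  calc U.card.choose j ≤ U.card ^ j := by
        simpa using Nat.choose_le_pow U.card j
    _ ≤ _ := by
      simp only [one_pow, mul_one]
      exact Nat.le_mul_of_pos_right _ h2

/-- Large subsets of a set. -/
lemma card_large_subsets (A : Finset ℕ) (j : ℕ) :
    (A.powerset.filter fun I => A.card ≤ I.card + j).card ≤ (A.card + 1) ^ j := by
  classical
  refine le_trans ?_ (card_subs_le_pow A j)
  apply card_le_card_of_injOn (fun I => A \ I)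
  · intro I hI
    rw [mem_coe, mem_filter, mem_powerset] at hI
    rw [mem_coe, mem_subs]
    refine ⟨sdiff_subset, ?_⟩
    rw [card_sdiff_of_subset hI.1]
    omega
  · intro I hI J hJ h
    rw [mem_coe, mem_filter, mem_powerset] at hI hJ
    have h' : A \ I = A \ J := h
    rw [← Finset.sdiff_sdiff_eq_self hI.1, h', Finset.sdiff_sdiff_eq_self hJ.1]

lemma upper_count {k t q : ℕ} (hk : t + 3 ≤ k) {U : Finset ℕ} {F F' M : Finset (Finset ℕ)}
    (hF : F ⊆ powersetCard k U) (hF' : F' ⊆ F)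
    (hMq : ∀ N ∈ M, N.card ≤ q) (h2 : ∀ B ∈ M, ∀ C ∈ M, t ≤ (B ∩ C).card)
    (hcov : ∀ A ∈ F, A ∉ F' → ∃ N ∈ M, N ⊆ A) :
    (interFam F).card ≤ (dset t M).card * (subs U (k - t - 1)).card +
      (M.card * 2 ^ q + 1) * (subs U (k - t - 2)).card + (k + 1) ^ (t + 1) * F'.card := by
  classical
  set X1 := subs U (k - t - 2) with hX1
  set X2 := F'.biUnion fun A => A.powerset.filter fun I => A.card ≤ I.card + (t + 1) with hX2
  set X3 := M.biUnion fun N => (N.powerset ×ˢ X1).image fun p => p.1 ∪ p.2 with hX3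
  set X4 := (dset t M).biUnion fun D => (subs U (k - t - 1)).image fun S => D ∪ S with hX4
  have hcover : interFam F ⊆ X4 ∪ (X3 ∪ X1) ∪ X2 := by
    intro I hI
    obtain ⟨A, hA, B, hB, hne, hAB⟩ := mem_interFam.1 hI
    obtain ⟨hAU, hAk⟩ := mem_powersetCard.1 (hF hA)
    obtain ⟨hBU, hBk⟩ := mem_powersetCard.1 (hF hB)
    have hIA : I ⊆ A := by rw [← hAB]; exact inter_subset_left
    have hIB : I ⊆ B := by rw [← hAB]; exact inter_subset_right
    have hIk : I.card < k := by
      by_contra hcon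
      have e1 := eq_of_subset_of_card_le hIA (by omega)
      have e2 := eq_of_subset_of_card_le hIB (by omega)
      exact hne (e1.symm.trans e2)
    have hbad : ∀ A ∈ F', A.card = k → I ⊆ A → I ⊆ U → I ∈ X4 ∪ (X3 ∪ X1) ∪ X2 := by
      intro A hA hAk hIA hIU
      by_cases h : I.card ≤ k - t - 2
      · have : I ∈ X1 := mem_subs.2 ⟨hIU, h⟩
        simp [this]
      · have : I ∈ X2 := mem_biUnion.2 ⟨A, hA, mem_filter.2 ⟨mem_powerset.2 hIA, by omega⟩⟩
        simp [this]
    by_cases hA' : A ∈ F'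
    · exact hbad A hA' hAk hIA (hIA.trans hAU)
    by_cases hB' : B ∈ F'
    · exact hbad B hB' hBk hIB (hIA.trans hAU)
    obtain ⟨N, hN, hNA⟩ := hcov A hA hA'
    obtain ⟨L, hL, hLB⟩ := hcov B hB hB'
    have hX3m : ∀ N ∈ M, (I \ N).card ≤ k - t - 2 → I ∈ X4 ∪ (X3 ∪ X1) ∪ X2 := by
      intro N hN h
      have : I ∈ X3 := by
        refine mem_biUnion.2 ⟨N, hN, mem_image.2 ⟨(I ∩ N, I \ N), ?_, ?_⟩⟩
        · rw [mem_product, mem_powerset]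
          exact ⟨inter_subset_right, mem_subs.2 ⟨sdiff_subset.trans (hIA.trans hAU), h⟩⟩
        · ext x; simp only [mem_union, mem_inter, mem_sdiff]; tauto
      simp [this]
    by_cases hN2 : t + 2 ≤ N.card
    · apply hX3m N hN
      have h : (I \ N).card ≤ (A \ N).card := card_le_card (sdiff_subset_sdiff hIA (Subset.refl _))
      rw [card_sdiff_of_subset hNA] at h
      omega
    by_cases hL2 : t + 2 ≤ L.card
    · apply hX3m L hL
      have h : (I \ L).card ≤ (B \ L).card := card_le_card (sdiff_subset_sdiff hIB (Subset.refl _))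
      rw [card_sdiff_of_subset hLB] at h
      omega
    have hDI : N ∩ L ⊆ I := by rw [← hAB]; exact inter_subset_inter hNA hLB
    have hNL := h2 N hN L hL
    by_cases hD : (N ∩ L).card = t
    · have : I ∈ X4 := by
        refine mem_biUnion.2 ⟨N ∩ L, mem_dset.2 ⟨⟨N, hN, L, hL, by omega, by omega, rfl⟩, hD⟩,
          mem_image.2 ⟨I \ (N ∩ L), mem_subs.2 ⟨sdiff_subset.trans (hIA.trans hAU), ?_⟩, ?_⟩⟩
        · rw [card_sdiff_of_subset hDI]; omega
        · exact union_sdiff_of_subset hDI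
      simp [this]
    · apply hX3m N hN
      have e := eq_of_subset_of_card_le (inter_subset_left : N ∩ L ⊆ N) (by omega)
      rw [e] at hDI hNL hD
      rw [card_sdiff_of_subset hDI]
      omega
  have c2 : X2.card ≤ (k + 1) ^ (t + 1) * F'.card := by
    calc X2.card ≤ ∑ A ∈ F', (k + 1) ^ (t + 1) := by
          refine card_biUnion_le.trans (sum_le_sum fun A hA => ?_)
          have := card_large_subsets A (t + 1)
          rwa [(mem_powersetCard.1 (hF (hF' hA))).2] at this ⊢
      _ = _ := by simp [mul_comm]
  have c3 : X3.card ≤ M.card * 2 ^ q * X1.card := by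
    calc X3.card ≤ ∑ N ∈ M, 2 ^ q * X1.card := by
          refine card_biUnion_le.trans (sum_le_sum fun N hN => ?_)
          refine card_image_le.trans ?_
          rw [card_product, card_powerset]
          exact Nat.mul_le_mul_right _ (Nat.pow_le_pow_right (by norm_num) (hMq N hN))
      _ = _ := by simp [mul_assoc]
  have c4 : X4.card ≤ (dset t M).card * (subs U (k - t - 1)).card := by
    calc X4.card ≤ ∑ D ∈ dset t M, (subs U (k - t - 1)).card :=
          card_biUnion_le.trans (sum_le_sum fun D _ => card_image_le)
      _ = _ := by simp
  have u1 := card_union_le (X4 ∪ (X3 ∪ X1)) X2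
  have u2 := card_union_le X4 (X3 ∪ X1)
  have u3 := card_union_le X3 X1
  have u0 := card_le_card hcover
  have : (M.card * 2 ^ q + 1) * X1.card = M.card * 2 ^ q * X1.card + X1.card := by ring
  rw [this]
  omega

/-- The family attached to a `(t+2)`-set `Z`. -/
def AZ (U Z : Finset ℕ) (k t : ℕ) : Finset (Finset ℕ) :=
  (powersetCard k U).filter fun A => t + 1 ≤ (A ∩ Z).card

lemma mem_AZ {U Z : Finset ℕ} {k t : ℕ} {A : Finset ℕ} :
    A ∈ AZ U Z k t ↔ (A ⊆ U ∧ A.card = k) ∧ t + 1 ≤ (A ∩ Z).card := by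
  unfold AZ; rw [mem_filter, mem_powersetCard]

/-- For `v ≠ w` in `Z` and a `(k-t-1)`-set `S` outside `Z`, the set `Z \ {v,w} ∪ S` is an
intersection, and the only members of `AZ` realising it are the two obvious ones. -/
lemma AZ_member {U Z : Finset ℕ} {k t : ℕ} (hk : t + 3 ≤ k) (hZU : Z ⊆ U) (hZ : Z.card = t + 2)
    {v : ℕ} (hv : v ∈ Z) {S : Finset ℕ} (hS : S ⊆ U \ Z) (hSc : S.card = k - t - 1) :
    Z.erase v ∪ S ∈ AZ U Z k t := by
  classical
  have hd : Disjoint (Z.erase v) S := by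
    rw [disjoint_left]
    intro x hx hx'
    exact (mem_sdiff.1 (hS hx')).2 (mem_of_mem_erase hx)
  rw [mem_AZ]
  refine ⟨⟨union_subset ((erase_subset _ _).trans hZU) (hS.trans sdiff_subset), ?_⟩, ?_⟩
  · rw [card_union_of_disjoint hd, card_erase_of_mem hv]; omega
  · have : Z.erase v ⊆ (Z.erase v ∪ S) ∩ Z := subset_inter subset_union_left (erase_subset _ _)
    have := card_le_card this
    rw [card_erase_of_mem hv] at this
    omega

lemma AZ_inter {U Z : Finset ℕ} {k t : ℕ} (hk : t + 3 ≤ k) (hZU : Z ⊆ U) (hZ : Z.card = t + 2)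
    {v w : ℕ} (hv : v ∈ Z) (hw : w ∈ Z) (hvw : v ≠ w) {S : Finset ℕ} (hS : S ⊆ U \ Z)
    (hSc : S.card = k - t - 1) :
    (Z.erase v).erase w ∪ S ∈ interFam (AZ U Z k t) := by
  classical
  rw [mem_interFam]
  refine ⟨_, AZ_member hk hZU hZ hv hS hSc, _, AZ_member hk hZU hZ hw hS hSc, ?_, ?_⟩
  · intro h
    have hw' : w ∈ Z.erase v ∪ S := by simp [hw, hvw.symm]
    rw [h, mem_union] at hw'
    rcases hw' with h' | h'
    · simp at h'
    · exact (mem_sdiff.1 (hS h')).2 hw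
  · ext x
    simp only [mem_inter, mem_union, mem_erase]
    tauto

/-- Lower bound for the extremal family. -/
lemma AZ_lower {U Z : Finset ℕ} {n k t : ℕ} (hU : U.card = n) (hk : t + 3 ≤ k) (hZU : Z ⊆ U)
    (hZ : Z.card = t + 2) :
    (t + 2).choose 2 * (n - t - 2).choose (k - t - 1) ≤ (interFam (AZ U Z k t)).card := by
  classical
  have e1 : (powersetCard 2 Z ×ˢ powersetCard (k - t - 1) (U \ Z)).card =
      (t + 2).choose 2 * (n - t - 2).choose (k - t - 1) := by
    rw [card_product, card_powersetCard, card_powersetCard, hZ, card_sdiff_of_subset hZU, hU, hZ]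
    rfl
  rw [← e1]
  apply card_le_card_of_injOn (fun p => (Z \ p.1) ∪ p.2)
  · rintro ⟨P, S⟩ h
    rw [mem_coe, mem_product, mem_powersetCard, mem_powersetCard] at h
    obtain ⟨⟨hP, hPc⟩, hS, hSc⟩ := h
    obtain ⟨v, w, hvw, rfl⟩ := card_eq_two.1 hPc
    have hv : v ∈ Z := hP (by simp)
    have hw : w ∈ Z := hP (by simp)
    have := AZ_inter hk hZU hZ hv hw hvw hS hSc
    have e : Z \ {v, w} = (Z.erase v).erase w := by
      ext x; simp only [mem_sdiff, mem_insert, mem_singleton, mem_erase]; tauto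
    rw [mem_coe]
    show Z \ {v, w} ∪ S ∈ _
    rw [e]
    exact this
  · rintro ⟨P, S⟩ h ⟨P', S'⟩ h' heq
    rw [mem_coe, mem_product, mem_powersetCard, mem_powersetCard] at h h'
    simp only at h h' heq
    have key : ∀ P S : Finset ℕ, P ⊆ Z → S ⊆ U \ Z →
        P = Z \ (Z \ P ∪ S) ∧ S = (Z \ P ∪ S) \ Z := by
      intro P S hP hS
      constructor
      · ext x
        have h1 := @hP x
        have h2 := @hS x
        simp only [mem_sdiff, mem_union] at h2 ⊢
        tauto
      · ext x
        have h2 := @hS x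
        simp only [mem_sdiff, mem_union] at h2 ⊢
        tauto
    have k1 := key P S h.1.1 h.2.1
    have k2 := key P' S' h'.1.1 h'.2.1
    rw [heq] at k1
    rw [Prod.mk.injEq]
    exact ⟨k1.1.trans k2.1.symm, k1.2.trans k2.2.symm⟩

lemma interFam_mono {F G : Finset (Finset ℕ)} (h : F ⊆ G) : interFam F ⊆ interFam G := by
  intro I hI
  obtain ⟨A, hA, B, hB, hne, hAB⟩ := mem_interFam.1 hI
  exact mem_interFam.2 ⟨A, h hA, B, h hB, hne, hAB⟩

lemma interFam_map (σ : Equiv.Perm ℕ) (F : Finset (Finset ℕ)) :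
    (interFam (F.image fun A => A.image σ)).card = (interFam F).card := by
  classical
  have : interFam (F.image fun A => A.image σ) = (interFam F).image fun A => A.image σ := by
    ext I
    constructor
    · intro h
      obtain ⟨A', hA', B', hB', hne, rfl⟩ := mem_interFam.1 h
      obtain ⟨A, hA, rfl⟩ := mem_image.1 hA'
      obtain ⟨B, hB, rfl⟩ := mem_image.1 hB'
      refine mem_image.2 ⟨A ∩ B, mem_interFam.2 ⟨A, hA, B, hB, fun h => hne (by rw [h]), rfl⟩, ?_⟩
      rw [image_inter _ _ σ.injective]
    · intro h
      obtain ⟨I, hI, rfl⟩ := mem_image.1 h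
      obtain ⟨A, hA, B, hB, hne, rfl⟩ := mem_interFam.1 hI
      refine mem_interFam.2 ⟨A.image σ, mem_image_of_mem _ hA, B.image σ, mem_image_of_mem _ hB,
        fun h => hne (image_injective σ.injective h), ?_⟩
      rw [image_inter _ _ σ.injective]
  rw [this, card_image_of_injective _ (image_injective σ.injective)]

lemma AZ_card_eq {U Z W : Finset ℕ} {k t : ℕ} (hZ : Z ⊆ U) (hW : W ⊆ U) (hc : Z.card = W.card) :
    (interFam (AZ U Z k t)).card ≤ (interFam (AZ U W k t)).card := by
  classical
  -- a permutation of `ℕ` preserving `U` and mapping `Z` to `W`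
  have hσ : ∃ σ : Equiv.Perm ℕ, (∀ x ∈ U, σ x ∈ U) ∧ ∀ x ∈ Z, σ x ∈ W := by
    let e : {x : U // (x : ℕ) ∈ Z} ≃ {x : U // (x : ℕ) ∈ W} := by
      apply Fintype.equivOfCardEq
      have h : ∀ Z ⊆ U, Fintype.card {x : U // (x : ℕ) ∈ Z} = Z.card := by
        intro Z hZ
        rw [← Fintype.card_coe Z]
        exact Fintype.card_congr ⟨fun x => ⟨x.1.1, x.2⟩, fun x => ⟨⟨x.1, hZ x.2⟩, x.2⟩,
          fun x => rfl, fun x => rfl⟩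
      rw [h Z hZ, h W hW, hc]
    let τ : Equiv.Perm U := e.extendSubtype
    refine ⟨Equiv.Perm.ofSubtype τ, ?_, ?_⟩
    · intro x hx
      have := Equiv.Perm.ofSubtype_apply_of_mem τ hx
      rw [this]
      exact (τ ⟨x, hx⟩).2
    · intro x hx
      have hxU := hZ hx
      rw [Equiv.Perm.ofSubtype_apply_of_mem τ hxU]
      exact e.extendSubtype_mem ⟨x, hxU⟩ hx
  obtain ⟨σ, h1, h2⟩ := hσ
  rw [← interFam_map σ (AZ U Z k t)]
  apply card_le_card
  apply interFam_mono
  intro A' hA'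
  obtain ⟨A, hA, rfl⟩ := mem_image.1 hA'
  rw [mem_AZ] at hA ⊢
  refine ⟨⟨?_, ?_⟩, ?_⟩
  · intro x hx
    obtain ⟨y, hy, rfl⟩ := mem_image.1 hx
    exact h1 y (hA.1.1 hy)
  · rw [card_image_of_injective _ σ.injective, hA.1.2]
  · refine hA.2.trans ?_
    rw [← card_image_of_injective (A ∩ Z) σ.injective]
    apply card_le_card
    intro x hx
    obtain ⟨y, hy, rfl⟩ := mem_image.1 hx
    rw [mem_inter] at hy ⊢
    exact ⟨mem_image_of_mem _ hy.1, h2 y hy.2⟩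

lemma choose_step {R n i : ℕ} (h : R * (i + 1) + i ≤ n) : R * n.choose i ≤ n.choose (i + 1) := by
  have h1 := Nat.choose_succ_right_eq n i
  have h2 : R * (i + 1) ≤ n - i := by omega
  have : (i + 1) * (R * n.choose i) ≤ (i + 1) * n.choose (i + 1) := by
    calc (i + 1) * (R * n.choose i) = n.choose i * (R * (i + 1)) := by ring
      _ ≤ n.choose i * (n - i) := Nat.mul_le_mul_left _ h2
      _ = n.choose (i + 1) * (i + 1) := h1.symm
      _ = _ := by ring
  exact Nat.le_of_mul_le_mul_left this (by omega)

lemma subs_le {R : ℕ} (hR : 2 ≤ R) {U : Finset ℕ} : ∀ {i : ℕ}, R * i + i ≤ U.card →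
    (subs U i).card ≤ 2 * U.card.choose i := by
  intro i
  induction i with
  | zero => intro _; rw [card_subs_eq]; simp
  | succ i ih =>
    intro h
    have h1 := ih (by nlinarith)
    have h2 := choose_step (R := R) (n := U.card) (i := i) (by nlinarith)
    rw [card_subs_eq, sum_range_succ, ← card_subs_eq]
    nlinarith

lemma choose_sub_bound (n m : ℕ) : ∀ a ≤ n,
    n.choose (m + 1) ≤ (n - a).choose (m + 1) + a * (n - 1).choose m := by
  intro a
  induction a with
  | zero => intro _; simp
  | succ a ih =>
    intro ha
    have h1 := ih (by omega)
    obtain ⟨c, hc⟩ : ∃ c, n - a = c + 1 := ⟨n - a - 1, by omega⟩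
    have e : n - (a + 1) = c := by omega
    rw [hc, Nat.choose_succ_succ] at h1
    rw [e]
    have h2 : c.choose m ≤ (n - 1).choose m := Nat.choose_le_choose _ (by omega)
    nlinarith

lemma choose_sub_ratio {R n m a : ℕ} (ha : a ≤ n) (hm : R * m ≤ n) :
    R * n.choose m ≤ R * (n - a).choose m + a * n.choose m := by
  cases m with
  | zero => simp
  | succ m =>
    rcases Nat.eq_zero_or_pos n with rfl | hn
    · have : a = 0 := by omega
      subst this; simp
    have h1 := choose_sub_bound n m a ha
    have h2 : R * (n - 1).choose m ≤ n.choose (m + 1) := by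
      obtain ⟨c, rfl⟩ : ∃ c, n = c + 1 := ⟨n - 1, by omega⟩
      have h3 := Nat.add_one_mul_choose_eq c m
      have : (m + 1) * (R * c.choose m) ≤ (m + 1) * (c + 1).choose (m + 1) := by
        nlinarith [Nat.mul_le_mul_right (c.choose m) hm]
      exact Nat.le_of_mul_le_mul_left this (by omega)
    calc R * n.choose (m + 1) ≤ R * ((n - a).choose (m + 1) + a * (n - 1).choose m) :=
          Nat.mul_le_mul_left _ h1
      _ = R * (n - a).choose (m + 1) + a * (R * (n - 1).choose m) := by ring
      _ ≤ _ := by gcongr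

lemma choose_le_npow (n i : ℕ) : ∀ j : ℕ, n.choose (i + j) ≤ n ^ j * n.choose i := by
  intro j
  induction j with
  | zero => simp
  | succ j ih =>
    have h1 := Nat.choose_succ_right_eq n (i + j)
    have h2 : n.choose (i + j + 1) ≤ n * n.choose (i + j) := by
      calc n.choose (i + j + 1) ≤ n.choose (i + j + 1) * (i + j + 1) :=
            Nat.le_mul_of_pos_right _ (by omega)
        _ = n.choose (i + j) * (n - (i + j)) := h1
        _ ≤ n.choose (i + j) * n := Nat.mul_le_mul_left _ (by omega)
        _ = _ := by ring
    calc n.choose (i + (j + 1)) ≤ n * n.choose (i + j) := h2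
      _ ≤ n * (n ^ j * n.choose i) := Nat.mul_le_mul_left _ ih
      _ = _ := by ring

/-- The numerical comparison when there is no full `(t+2)`-set. -/
lemma part4_num {t k n R q d K f : ℕ} {U : Finset ℕ} (hU : U.card = n) (hq : q = 10 * (t + 1))
    (hk : t + 3 ≤ k) (hR2 : 2 ≤ R) (hn1 : R ^ 2 * k ≤ n) (hn2 : n ≤ 4 * (R ^ 2 * k))
    (hkR : k ≤ R ^ 4) (hd : d + 1 ≤ (t + 2).choose 2) (hf : R ^ (q + 1) * f ≤ n.choose k)
    (hR : 2 * (t + 2).choose 2 + 2 * K + 8 ^ (t + 1) + (t + 2).choose 2 * (t + 2) ≤ R) :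
    d * (subs U (k - t - 1)).card + K * (subs U (k - t - 2)).card + (k + 1) ^ (t + 1) * f
      ≤ (t + 2).choose 2 * (n - t - 2).choose (k - t - 1) := by
  obtain ⟨i, hi⟩ : ∃ i, k = i + t + 2 := ⟨k - t - 2, by omega⟩
  have e1 : k - t - 1 = i + 1 := by omega
  have e2 : k - t - 2 = i := by omega
  rw [e1, e2]
  set q0 := n.choose (i + 1) with hq0
  have hRk : R * k + k ≤ n := by nlinarith
  have hRi : R * (i + 1) ≤ R * k := Nat.mul_le_mul_left _ (by omega)
  have hRi' : R * i ≤ R * k := Nat.mul_le_mul_left _ (by omega)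
  have hP : R * (subs U i).card ≤ 2 * q0 := by
    have h1 := subs_le hR2 (U := U) (i := i) (by rw [hU]; omega)
    have h2 := choose_step (R := R) (n := n) (i := i) (by omega)
    rw [hU] at h1
    nlinarith
  have hQ : (subs U (i + 1)).card = (subs U i).card + q0 := by
    rw [card_subs_eq, sum_range_succ, ← card_subs_eq, hU]
  have hB : R * q0 ≤ R * (n - t - 2).choose (i + 1) + (t + 2) * q0 := by
    have := choose_sub_ratio (R := R) (n := n) (m := i + 1) (a := t + 2) (by omega)
      (by omega)
    rwa [← Nat.sub_sub] at this
  have hf' : R * ((k + 1) ^ (t + 1) * f) ≤ 8 ^ (t + 1) * q0 := by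
    have h1 : n.choose k ≤ n ^ (t + 1) * q0 := by
      have := choose_le_npow n (i + 1) (t + 1)
      rwa [show i + 1 + (t + 1) = k by omega] at this
    have h2 : (k + 1) * n ≤ 8 * R ^ 10 := by
      have a1 : k + 1 ≤ 2 * R ^ 4 := by
        have : 1 ≤ R ^ 4 := Nat.one_le_pow _ _ (by omega)
        omega
      have a2 : n ≤ 4 * R ^ 6 := by
        calc n ≤ 4 * (R ^ 2 * k) := hn2
          _ ≤ 4 * (R ^ 2 * R ^ 4) := by gcongr
          _ = _ := by ring
      calc (k + 1) * n ≤ (2 * R ^ 4) * (4 * R ^ 6) := Nat.mul_le_mul a1 a2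
        _ = _ := by ring
    have h3 : R ^ q * (R * ((k + 1) ^ (t + 1) * f)) ≤ R ^ q * (8 ^ (t + 1) * q0) := by
      calc R ^ q * (R * ((k + 1) ^ (t + 1) * f)) = (k + 1) ^ (t + 1) * (R ^ (q + 1) * f) := by ring
        _ ≤ (k + 1) ^ (t + 1) * (n ^ (t + 1) * q0) := Nat.mul_le_mul_left _ (hf.trans h1)
        _ = ((k + 1) * n) ^ (t + 1) * q0 := by rw [mul_pow]; ring
        _ ≤ (8 * R ^ 10) ^ (t + 1) * q0 := by gcongr
        _ = R ^ q * (8 ^ (t + 1) * q0) := by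
          rw [mul_pow, ← pow_mul, hq]; ring
    exact Nat.le_of_mul_le_mul_left h3 (by positivity)
  obtain ⟨b, hb⟩ : ∃ b, (t + 2).choose 2 = b := ⟨_, rfl⟩
  rw [hb] at hd hR ⊢
  apply Nat.le_of_mul_le_mul_left _ (show 0 < R by omega)
  have hd1 : d * (R * (subs U i).card) ≤ d * (2 * q0) := Nat.mul_le_mul_left _ hP
  have hK1 : K * (R * (subs U i).card) ≤ K * (2 * q0) := Nat.mul_le_mul_left _ hP
  have hb1 : b * (R * q0) ≤ b * (R * (n - t - 2).choose (i + 1) + (t + 2) * q0) :=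
    Nat.mul_le_mul_left _ hB
  have hRq : (2 * b + 2 * K + 8 ^ (t + 1) + b * (t + 2)) * q0 ≤ R * q0 := Nat.mul_le_mul_right _ hR
  have hdb : (d + 1) * (R * q0) ≤ b * (R * q0) := Nat.mul_le_mul_right _ hd
  have hdb2 : (d + 1) * (2 * q0) ≤ b * (2 * q0) := Nat.mul_le_mul_right _ hd
  rw [hQ]
  generalize 8 ^ (t + 1) = E at *
  generalize (k + 1) ^ (t + 1) * f = G at *
  generalize (n - t - 2).choose (i + 1) = H at *
  generalize (subs U i).card = P at *
  clear_value q0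
  have x1 : R * (d * (P + q0) + K * P + G) = d * (R * P) + d * (R * q0) + K * (R * P) + R * G := by
    ring
  rw [x1]
  have x2 : b * (R * H + (t + 2) * q0) = R * (b * H) + b * (t + 2) * q0 := by ring
  rw [x2] at hb1
  have x3 : (2 * b + 2 * K + E + b * (t + 2)) * q0
    = b * (2 * q0) + K * (2 * q0) + E * q0 + b * (t + 2) * q0 := by ring
  rw [x3] at hRq
  have x4 : (d + 1) * (R * q0) = d * (R * q0) + R * q0 := by ring
  have x5 : (d + 1) * (2 * q0) = d * (2 * q0) + 2 * q0 := by ring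
  rw [x4] at hdb
  rw [x5] at hdb2
  omega

open Classical in
/-- The `m`-sets outside `Z` that miss some member of `G`. -/
noncomputable def lossFam (U Z : Finset ℕ) (m : ℕ) (G : Finset (Finset ℕ)) : Finset (Finset ℕ) :=
  (powersetCard m (U \ Z)).filter fun S => ∃ A ∈ G, Disjoint S A

open Classical in
lemma mem_lossFam {U Z : Finset ℕ} {m : ℕ} {G : Finset (Finset ℕ)} {S : Finset ℕ} :
    S ∈ lossFam U Z m G ↔ (S ⊆ U \ Z ∧ S.card = m) ∧ ∃ A ∈ G, Disjoint S A := by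
  unfold lossFam
  rw [mem_filter, mem_powersetCard]

lemma loss_one {U Z : Finset ℕ} {k t : ℕ} (ht : 1 ≤ t) (hk : t + 3 ≤ k) (hZU : Z ⊆ U)
    (hZ : Z.card = t + 2) {F : Finset (Finset ℕ)} (hF : F ⊆ powersetCard k U)
    (htint : tIntersecting t F) {S : Finset ℕ}
    (hS : S ∈ lossFam U Z (k - t - 1) (F.filter fun A => (A ∩ Z).card ≤ t)) :
    ∃ I ∈ interFam (AZ U Z k t), I ∉ interFam (F.filter fun A => t + 1 ≤ (A ∩ Z).card) ∧
      I \ Z = S := by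
  classical
  obtain ⟨⟨hSU, hSc⟩, A, hA, hSA⟩ := mem_lossFam.1 hS
  obtain ⟨hAF, hAZ⟩ := mem_filter.1 hA
  have hZS : ∀ x ∈ S, x ∉ Z := fun x hx => (mem_sdiff.1 (hSU hx)).2
  have hv : ∃ v ∈ Z, (A ∩ Z.erase v).card < t := by
    by_cases hne : (A ∩ Z).Nonempty
    · obtain ⟨v, hv⟩ := hne
      refine ⟨v, (mem_inter.1 hv).2, ?_⟩
      have : A ∩ Z.erase v ⊆ (A ∩ Z).erase v := by
        intro x hx
        simp only [mem_inter, mem_erase] at hx ⊢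
        tauto
      have := card_le_card this
      have h0 : 0 < (A ∩ Z).card := card_pos.2 ⟨v, hv⟩
      rw [card_erase_of_mem hv] at this
      omega
    · obtain ⟨v, hv⟩ : Z.Nonempty := card_pos.1 (by omega)
      refine ⟨v, hv, ?_⟩
      have : A ∩ Z.erase v ⊆ A ∩ Z := inter_subset_inter_left (erase_subset _ _)
      rw [not_nonempty_iff_eq_empty.1 hne] at this
      rw [subset_empty.1 this]
      rw [card_empty]; omega
  obtain ⟨v, hv, hvc⟩ := hv
  obtain ⟨w, hw, hwv⟩ := exists_mem_ne (show 1 < Z.card by omega) v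
  have hNF : Z.erase v ∪ S ∉ F := by
    intro hN
    have h1 := htint A hAF _ hN
    have : A ∩ (Z.erase v ∪ S) ⊆ A ∩ Z.erase v := by
      intro x hx
      have hd : x ∈ S → x ∉ A := fun h => disjoint_left.1 hSA h
      simp only [mem_inter, mem_union] at hx ⊢
      tauto
    have := card_le_card this
    omega
  refine ⟨(Z.erase v).erase w ∪ S, AZ_inter hk hZU hZ hv hw hwv.symm hSU hSc, ?_, ?_⟩
  · intro hI
    obtain ⟨B, hB, C, hC, hBC, hI⟩ := mem_interFam.1 hI
    have claim : ∀ B ∈ F.filter fun A => t + 1 ≤ (A ∩ Z).card,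
        (Z.erase v).erase w ∪ S ⊆ B → B = Z.erase v ∪ S ∨ B = Z.erase w ∪ S := by
      intro B hB hIB
      obtain ⟨hBF, hBZ⟩ := mem_filter.1 hB
      obtain ⟨hBU, hBk⟩ := mem_powersetCard.1 (hF hBF)
      have hsum := card_inter_add_card_sdiff B Z
      have hSB : S ⊆ B \ Z := fun x hx =>
        mem_sdiff.2 ⟨hIB (mem_union_right _ hx), hZS x hx⟩
      have hSeq : S = B \ Z := eq_of_subset_of_card_le hSB (by omega)
      have hc : (B ∩ Z).card = t + 1 := by rw [← hSeq] at hsum; omega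
      obtain ⟨z, hzZ, hzB⟩ := exists_mem_notMem_of_card_lt_card
        (show (B ∩ Z).card < Z.card by omega)
      have hzB' : z ∉ B := fun h => hzB (mem_inter.2 ⟨h, hzZ⟩)
      have hzvw : z = v ∨ z = w := by
        by_contra hcon
        push Not at hcon
        apply hzB'
        apply hIB
        simp [hzZ, hcon.1, hcon.2]
      have heq : B = Z.erase z ∪ S := by
        apply eq_of_subset_of_card_le
        · intro x hx
          rw [hSeq]
          have : x ≠ z := fun h => hzB' (h ▸ hx)
          simp only [mem_union, mem_erase, mem_sdiff]
          tauto
        · refine (card_union_le _ _).trans ?_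
          rw [card_erase_of_mem hzZ]
          omega
      rcases hzvw with rfl | rfl
      · exact Or.inl heq
      · exact Or.inr heq
    have hB1 := claim B hB (by rw [← hI]; exact inter_subset_left)
    have hC1 := claim C hC (by rw [← hI]; exact inter_subset_right)
    have hBF := (mem_filter.1 hB).1
    have hCF := (mem_filter.1 hC).1
    rcases hB1 with h | h
    · exact hNF (h ▸ hBF)
    · rcases hC1 with h' | h'
      · exact hNF (h' ▸ hCF)
      · exact hBC (h.trans h'.symm)
  · ext x
    have := hZS x
    simp only [mem_sdiff, mem_union, mem_erase]
    tauto

lemma loss_count {U Z : Finset ℕ} {k t : ℕ} (ht : 1 ≤ t) (hk : t + 3 ≤ k) (hZU : Z ⊆ U)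
    (hZ : Z.card = t + 2) {F : Finset (Finset ℕ)} (hF : F ⊆ powersetCard k U)
    (htint : tIntersecting t F) :
    (interFam (F.filter fun A => t + 1 ≤ (A ∩ Z).card)).card +
      (lossFam U Z (k - t - 1) (F.filter fun A => (A ∩ Z).card ≤ t)).card
      ≤ (interFam (AZ U Z k t)).card := by
  classical
  set I1 := interFam (F.filter fun A => t + 1 ≤ (A ∩ Z).card) with hI1
  have hsub : I1 ⊆ interFam (AZ U Z k t) := by
    apply interFam_mono
    intro A hA
    rw [mem_filter] at hA
    exact mem_AZ.2 ⟨mem_powersetCard.1 (hF hA.1), hA.2⟩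
  have h1 : lossFam U Z (k - t - 1) (F.filter fun A => (A ∩ Z).card ≤ t) ⊆
      (interFam (AZ U Z k t) \ I1).image fun I => I \ Z := by
    intro S hS
    obtain ⟨I, hI, hI', rfl⟩ := loss_one ht hk hZU hZ hF htint hS
    exact mem_image.2 ⟨I, mem_sdiff.2 ⟨hI, hI'⟩, rfl⟩
  have h2 := (card_le_card h1).trans card_image_le
  rw [card_sdiff_of_subset hsub] at h2
  have := card_le_card hsub
  omega

open Classical in
/-- Sets of size `s` outside `Z` contained in some member of `G`. -/
noncomputable def shadowFam (U Z : Finset ℕ) (s : ℕ) (G : Finset (Finset ℕ)) :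
    Finset (Finset ℕ) :=
  (powersetCard s (U \ Z)).filter fun S => ∃ A ∈ G, S ⊆ A

open Classical in
lemma mem_shadowFam {U Z : Finset ℕ} {m : ℕ} {G : Finset (Finset ℕ)} {S : Finset ℕ} :
    S ∈ shadowFam U Z m G ↔ (S ⊆ U \ Z ∧ S.card = m) ∧ ∃ A ∈ G, S ⊆ A := by
  unfold shadowFam
  rw [mem_filter, mem_powersetCard]

lemma shadow_double {U Z : Finset ℕ} {k m s N : ℕ} (hN : (U \ Z).card = N)
    {G : Finset (Finset ℕ)} (hG : ∀ A ∈ G, A.card ≤ k) :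
    (shadowFam U Z s G).card * (N - k).choose m ≤
      (lossFam U Z m G).card * (N - m).choose s := by
  classical
  apply card_mul_le_card_mul (fun S T : Finset ℕ => Disjoint S T)
  · intro S hS
    obtain ⟨-, A, hA, hSA⟩ := mem_shadowFam.1 hS
    have hsub : powersetCard m ((U \ Z) \ A) ⊆
        bipartiteAbove (fun S T : Finset ℕ => Disjoint S T) (lossFam U Z m G) S := by
      intro T hT
      rw [mem_powersetCard] at hT
      have hd : Disjoint T A := disjoint_of_subset_left hT.1 sdiff_disjoint
      rw [mem_bipartiteAbove]
      exact ⟨mem_lossFam.2 ⟨⟨hT.1.trans sdiff_subset, hT.2⟩, A, hA, hd⟩,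
        (disjoint_of_subset_right hSA hd).symm⟩
    refine le_trans ?_ (card_le_card hsub)
    rw [card_powersetCard]
    apply Nat.choose_le_choose
    have := le_card_sdiff A (U \ Z)
    have := hG A hA
    omega
  · intro T hT
    obtain ⟨⟨hT1, hT2⟩, -⟩ := mem_lossFam.1 hT
    have hsub : bipartiteBelow (fun S T : Finset ℕ => Disjoint S T) (shadowFam U Z s G) T ⊆
        powersetCard s ((U \ Z) \ T) := by
      intro S hS
      rw [mem_bipartiteBelow] at hS
      obtain ⟨⟨hS1, hS2⟩, -⟩ := mem_shadowFam.1 hS.1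
      exact mem_powersetCard.2 ⟨subset_sdiff.2 ⟨hS1, hS.2⟩, hS2⟩
    refine (card_le_card hsub).trans ?_
    rw [card_powersetCard, card_sdiff_of_subset hT1, hN, hT2]

lemma choose_steps {R n : ℕ} : ∀ (j i : ℕ), R * (i + j) + (i + j) ≤ n →
    R ^ j * n.choose i ≤ n.choose (i + j) := by
  intro j
  induction j with
  | zero => intro i _; simp
  | succ j ih =>
    intro i h
    have h1 := ih i (by nlinarith)
    have h2 := choose_step (R := R) (n := n) (i := i + j) (by nlinarith)
    calc R ^ (j + 1) * n.choose i = R * (R ^ j * n.choose i) := by ring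
      _ ≤ R * n.choose (i + j) := Nat.mul_le_mul_left _ h1
      _ ≤ _ := h2

lemma geom_bound (X : ℕ) (c : ℕ → ℕ) : ∀ m : ℕ, (∀ j < m, 2 ^ j * c j ≤ X) →
    ∑ j ∈ range m, c j ≤ 2 * X := by
  intro m h
  have key : 2 ^ m * ∑ j ∈ range m, c j + 2 * X ≤ 2 ^ m * (2 * X) := by
    induction m with
    | zero => simp
    | succ m ih =>
      have h1 := ih fun j hj => h j (by omega)
      have h2 := h m (by omega)
      rw [sum_range_succ, pow_succ]
      nlinarith
  exact Nat.le_of_mul_le_mul_left (by omega : 2 ^ m * ∑ j ∈ range m, c j ≤ 2 ^ m * (2 * X))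
    (by positivity)

lemma shadow_small {U Z : Finset ℕ} {k m t R N : ℕ} (hm : k = m + (t + 1)) (hR2 : 2 * (t + 1) ≤ R)
    (hN : (U \ Z).card = N) (hNR : R * k + 2 * k ≤ N) {G : Finset (Finset ℕ)}
    (hG : ∀ A ∈ G, A.card ≤ k) :
    R * ∑ j ∈ range m, (shadowFam U Z (m - 1 - j) G).card ≤ 4 * (lossFam U Z m G).card := by
  rw [mul_sum]
  have : 4 * (lossFam U Z m G).card = 2 * (2 * (lossFam U Z m G).card) := by ring
  rw [this]
  apply geom_bound
  intro j hj
  have hd := shadow_double (m := m) (s := m - 1 - j) hN hG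
  have hRm : R * m ≤ R * k := Nat.mul_le_mul_left _ (by omega)
  have h1 := choose_steps (R := R) (n := N - m) (j + 1) (m - 1 - j)
    (by rw [show m - 1 - j + (j + 1) = m by omega]; omega)
  rw [show m - 1 - j + (j + 1) = m by omega] at h1
  have h2 := choose_sub_ratio (R := R) (n := N - m) (m := m) (a := t + 1) (by omega) (by omega)
  have e : N - m - (t + 1) = N - k := by omega
  rw [e] at h2
  have h3 : (N - m).choose m ≤ 2 * (N - k).choose m := by
    have : 2 * (t + 1) * (N - m).choose m ≤ R * (N - m).choose m := Nat.mul_le_mul_right _ hR2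
    have h4 : R * (N - m).choose m ≤ R * (2 * (N - k).choose m) := by nlinarith
    exact Nat.le_of_mul_le_mul_left h4 (by omega)
  have hpos : 0 < (N - k).choose m := Nat.choose_pos (by omega)
  set a := (shadowFam U Z (m - 1 - j) G).card
  set L := (lossFam U Z m G).card
  have h5 : 2 ^ j * R ≤ R ^ (j + 1) := by
    rw [pow_succ]
    exact Nat.mul_le_mul_right _ (Nat.pow_le_pow_left (by omega) _)
  apply Nat.le_of_mul_le_mul_left _ hpos
  calc (N - k).choose m * (2 ^ j * (R * a)) = (2 ^ j * R) * (a * (N - k).choose m) := by ring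
    _ ≤ R ^ (j + 1) * (L * (N - m).choose (m - 1 - j)) := Nat.mul_le_mul h5 hd
    _ = L * (R ^ (j + 1) * (N - m).choose (m - 1 - j)) := by ring
    _ ≤ L * (2 * (N - k).choose m) := Nat.mul_le_mul_left _ (h1.trans h3)
    _ = _ := by ring

lemma choose_ratio1 (R : ℕ) : ∀ (b n k : ℕ), b ≤ k → k ≤ n → R * k ≤ n →
    R ^ b * (n - b).choose (k - b) ≤ n.choose k := by
  intro b
  induction b with
  | zero => intro n k _ _ _; simp
  | succ b ih =>
    intro n k hb hkn hn
    obtain ⟨k, rfl⟩ : ∃ k', k = k' + 1 := ⟨k - 1, by omega⟩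
    obtain ⟨n, rfl⟩ : ∃ n', n = n' + 1 := ⟨n - 1, by omega⟩
    rcases Nat.eq_zero_or_pos R with rfl | hR
    · simp
    have h1 := ih n k (by omega) (by omega) (by nlinarith)
    have h2 := Nat.add_one_mul_choose_eq n k
    have h3 : R * n.choose k ≤ (n + 1).choose (k + 1) := by
      have : (k + 1) * (R * n.choose k) ≤ (k + 1) * (n + 1).choose (k + 1) := by
        nlinarith [Nat.mul_le_mul_right (n.choose k) hn]
      exact Nat.le_of_mul_le_mul_left this (by omega)
    have e1 : n + 1 - (b + 1) = n - b := by omega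
    have e2 : k + 1 - (b + 1) = k - b := by omega
    rw [e1, e2]
    calc R ^ (b + 1) * (n - b).choose (k - b)
        = R * (R ^ b * (n - b).choose (k - b)) := by ring
      _ ≤ R * n.choose k := Nat.mul_le_mul_left _ h1
      _ ≤ _ := h3

/-- If `G` is spread over `B`, then a constant proportion of `m`-sets is lost. -/
lemma loss_large {U Z B : Finset ℕ} {m k R r : ℕ} (hR : 64 * (r + 1) ^ 4 ≤ R) (hr : k < 2 ^ r)
    {G : Finset (Finset ℕ)} (hG : ∀ A ∈ G, A ⊆ U ∧ A.card = k)
    (hB : SprOver R B (G.filter fun A => B ⊆ A)) (hmk : m ≤ k)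
    (hw : R * m + m ≤ ((U \ Z) \ B).card) :
    ((U \ Z) \ B).card.choose m ≤ 2 * (lossFam U Z m G).card := by
  classical
  set W := (U \ Z) \ B with hW
  set w := W.card with hwdef
  by_contra hcon
  push Not at hcon
  set Q := powersetCard m W with hQ
  have hQc : Q.card = w.choose m := by rw [hQ, card_powersetCard]
  set J' := Q.filter fun S => S ∉ lossFam U Z m G with hJ'
  have hhalf : Q.card ≤ 2 * J'.card := by
    have h1 : (Q.filter fun S => S ∈ lossFam U Z m G).card + J'.card = Q.card :=
      card_filter_add_card_filter_not _
    have h2 : (Q.filter fun S => S ∈ lossFam U Z m G).card ≤ (lossFam U Z m G).card :=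
      card_le_card fun S hS => (mem_filter.1 hS).2
    omega
  have hspr : Spr R Q.card J' (fun S => S) := by
    intro Y
    by_cases hY : Y ⊆ W ∧ Y.card ≤ m
    · have h1 := card_filter_superset_le (n := w) rfl J' (filter_subset _ _) Y hY.1
      have h2 := choose_ratio1 R Y.card w m hY.2 (by omega) (by omega)
      rw [hQc]
      exact (Nat.mul_le_mul_left _ h1).trans h2
    · have : (J'.filter fun S => Y ⊆ S) = ∅ := by
        apply filter_false_of_mem
        intro S hS hYS
        have hS' := mem_powersetCard.1 (mem_filter.1 hS).1
        exact hY ⟨hYS.trans hS'.1, by rw [← hS'.2]; exact card_le_card hYS⟩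
      rw [this]; simp
  have hQpos : 0 < Q.card := by rw [hQc]; exact Nat.choose_pos (by omega)
  obtain ⟨A, hA, S, hS, hd⟩ := cross_nat R r (G.filter fun A => B ⊆ A).card Q.card U hR
    (card_pos.2 hB.1) hQpos (G.filter fun A => B ⊆ A) (fun A => A \ B) J' (fun S => S)
    (fun A hA => sdiff_subset.trans (hG A (mem_filter.1 hA).1).1)
    (fun A hA => lt_of_le_of_lt ((card_le_card sdiff_subset).trans
      (hG A (mem_filter.1 hA).1).2.le) hr)
    (fun S hS => by
      have hS' := mem_powersetCard.1 (mem_filter.1 hS).1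
      show S.card < 2 ^ r
      omega)
    (sprOver_link hB _ (Subset.refl _)) hspr (by omega) hhalf
  obtain ⟨hSQ, hSL⟩ := mem_filter.1 hS
  obtain ⟨hSW, hSm⟩ := mem_powersetCard.1 hSQ
  apply hSL
  refine mem_lossFam.2 ⟨⟨hSW.trans sdiff_subset, hSm⟩, A, (mem_filter.1 hA).1, ?_⟩
  rw [disjoint_left]
  intro x hxS hxA
  have hxB : x ∉ B := (mem_sdiff.1 (hSW hxS)).2
  exact disjoint_left.1 hd (mem_sdiff.2 ⟨hxA, hxB⟩) hxS

/-- All intersections with a member of `F₂` are few. -/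
lemma gain_count {U Z : Finset ℕ} {k t : ℕ} (hk : t + 3 ≤ k) 
    (hZ : Z.card = t + 2) {F : Finset (Finset ℕ)} (hF : F ⊆ powersetCard k U) :
    (interFam F).card ≤ (interFam (F.filter fun A => t + 1 ≤ (A ∩ Z).card)).card +
      2 ^ (t + 2) * ((k + 1) ^ (t + 1) * (F.filter fun A => (A ∩ Z).card ≤ t).card +
        ∑ j ∈ range (k - t - 1),
          (shadowFam U Z (k - t - 1 - 1 - j) (F.filter fun A => (A ∩ Z).card ≤ t)).card) := by
  classical
  set F2 := F.filter fun A => (A ∩ Z).card ≤ t with hF2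
  set F1 := F.filter fun A => t + 1 ≤ (A ∩ Z).card with hF1
  set X := F2.biUnion fun A => A.powerset.filter fun I => A.card ≤ I.card + (t + 1) with hX
  set Y := (range (k - t - 1)).biUnion fun j => shadowFam U Z (k - t - 1 - 1 - j) F2 with hY
  have hbad : ∀ A ∈ F2, ∀ I ⊆ A, I ∈ (Z.powerset ×ˢ (X ∪ Y)).image fun p => p.1 ∪ p.2 := by
    intro A hA I hI
    obtain ⟨hAU, hAk⟩ := mem_powersetCard.1 (hF (mem_filter.1 hA).1)
    refine mem_image.2 ⟨(I ∩ Z, I \ Z), ?_, ?_⟩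
    · rw [mem_product, mem_powerset]
      refine ⟨inter_subset_right, mem_union.2 ?_⟩
      show I \ Z ∈ X ∨ I \ Z ∈ Y
      by_cases h : A.card ≤ (I \ Z).card + (t + 1)
      · exact Or.inl (mem_biUnion.2 ⟨A, hA, mem_filter.2
          ⟨mem_powerset.2 (sdiff_subset.trans hI), h⟩⟩)
      · refine Or.inr (mem_biUnion.2 ⟨k - t - 1 - 1 - (I \ Z).card, ?_, ?_⟩)
        · rw [mem_range]; omega
        · refine mem_shadowFam.2 ⟨⟨sdiff_subset_sdiff (hI.trans hAU) (Subset.refl _), ?_⟩, A, hA,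
            sdiff_subset.trans hI⟩
          omega
    · ext x; simp only [mem_union, mem_inter, mem_sdiff]; tauto
  have hcover : interFam F ⊆ interFam F1 ∪ (Z.powerset ×ˢ (X ∪ Y)).image fun p => p.1 ∪ p.2 := by
    intro I hI
    obtain ⟨A, hA, B, hB, hne, hAB⟩ := mem_interFam.1 hI
    by_cases hA2 : (A ∩ Z).card ≤ t
    · exact mem_union_right _ (hbad A (mem_filter.2 ⟨hA, hA2⟩) I (by rw [← hAB]; exact inter_subset_left))
    by_cases hB2 : (B ∩ Z).card ≤ t
    · exact mem_union_right _ (hbad B (mem_filter.2 ⟨hB, hB2⟩) I (by rw [← hAB]; exact inter_subset_right))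
    refine mem_union_left _ (mem_interFam.2 ⟨A, mem_filter.2 ⟨hA, by omega⟩, B,
      mem_filter.2 ⟨hB, by omega⟩, hne, hAB⟩)
  have cX : X.card ≤ (k + 1) ^ (t + 1) * F2.card := by
    calc X.card ≤ ∑ A ∈ F2, (k + 1) ^ (t + 1) := by
          refine card_biUnion_le.trans (sum_le_sum fun A hA => ?_)
          have := card_large_subsets A (t + 1)
          rwa [(mem_powersetCard.1 (hF (mem_filter.1 hA).1)).2] at this ⊢
      _ = _ := by simp [mul_comm]
  have cY : Y.card ≤ ∑ j ∈ range (k - t - 1), (shadowFam U Z (k - t - 1 - 1 - j) F2).card :=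
    card_biUnion_le
  have c1 := (card_le_card hcover).trans (card_union_le _ _)
  refine c1.trans (Nat.add_le_add_left ?_ _)
  refine card_image_le.trans ?_
  rw [card_product, card_powerset, hZ]
  exact Nat.mul_le_mul_left _ ((card_union_le _ _).trans (Nat.add_le_add cX cY))

/-- The numerical estimate for the large part. -/
lemma large_num {t k n R b m : ℕ} (hk : t + 3 ≤ k) (hm : k = m + (t + 1)) (hR64 : 64 ≤ R)
    (hRt : 2 * (t + 2) ≤ R) (hn : R ^ 2 * k ≤ n) (hkR : k ≤ R ^ 4)
    (hb : 10 * (t + 1) < b) (hbk : b ≤ k) :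
    4 * (2 ^ (t + 2) * ((k + 1) ^ (t + 1) * (R ^ b * (n - b).choose (k - b)))) ≤
      (n - b - (t + 2)).choose m := by
  obtain ⟨j, hj⟩ : ∃ j, b = t + 1 + j := ⟨b - (t + 1), by omega⟩
  obtain ⟨i, hi⟩ : ∃ i, m = i + j := ⟨m - j, by omega⟩
  have e : k - b = i := by omega
  rw [e]
  obtain ⟨D, hD⟩ : ∃ D, R ^ 2 = D + 2 := ⟨R ^ 2 - 2, by nlinarith [Nat.sub_add_cancel (show 2 ≤ R ^ 2 by nlinarith)]⟩
  have hDR : R ^ 2 ≤ 2 * D := by nlinarith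
  have hDR' : R ≤ D := by nlinarith
  have hDk : D * k + 2 * k ≤ n := by
    calc D * k + 2 * k = R ^ 2 * k := by rw [hD]; ring
      _ ≤ n := hn
  have hDm : D * m ≤ D * k := Nat.mul_le_mul_left _ (by omega)
  have h1 := choose_steps (R := D) (n := n - b) j i (by rw [← hi]; omega)
  rw [← hi] at h1
  have hDk3 : R * k ≤ D * k := Nat.mul_le_mul_right _ hDR'
  have hRm : R * m ≤ D * m := Nat.mul_le_mul_right _ hDR'
  have h64k : 64 * k ≤ R * k := Nat.mul_le_mul_right _ hR64
  have h2 := choose_sub_ratio (R := R) (n := n - b) (m := m) (a := t + 2) (by omega) (by omega)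
  have h3 : (n - b).choose m ≤ 2 * (n - b - (t + 2)).choose m := by
    have : 2 * (t + 2) * (n - b).choose m ≤ R * (n - b).choose m := Nat.mul_le_mul_right _ hRt
    have h4 : R * (n - b).choose m ≤ R * (2 * (n - b - (t + 2)).choose m) := by nlinarith
    exact Nat.le_of_mul_le_mul_left h4 (by omega)
  -- the power comparison
  have hk1 : k + 1 ≤ 2 * R ^ 4 := by
    have : 1 ≤ R ^ 4 := Nat.one_le_pow _ _ (by omega)
    omega
  have hpow : 2 ^ (t + 5) * (k + 1) ^ (t + 1) * R ^ b ≤ D ^ j := by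
    have hp : 2 ^ j * (2 ^ (t + 5) * (k + 1) ^ (t + 1) * R ^ b) ≤ 2 ^ j * D ^ j := by
      obtain ⟨l, hl⟩ : ∃ l, j = l + 5 * (t + 1) := ⟨j - 5 * (t + 1), by omega⟩
      have a1 : 2 ^ (j + (2 * t + 6)) ≤ R ^ l := by
        calc 2 ^ (j + (2 * t + 6)) ≤ 2 ^ (6 * l) := Nat.pow_le_pow_right (by norm_num) (by omega)
          _ = 64 ^ l := by rw [pow_mul]; norm_num
          _ ≤ R ^ l := Nat.pow_le_pow_left hR64 _
      calc 2 ^ j * (2 ^ (t + 5) * (k + 1) ^ (t + 1) * R ^ b)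
          ≤ 2 ^ j * (2 ^ (t + 5) * (2 * R ^ 4) ^ (t + 1) * R ^ b) := by gcongr
        _ = 2 ^ (j + (2 * t + 6)) * (R ^ (5 * (t + 1)) * R ^ j) := by
          rw [mul_pow, ← pow_mul, hj]
          ring
        _ ≤ R ^ l * (R ^ (5 * (t + 1)) * R ^ j) := Nat.mul_le_mul_right _ a1
        _ = (R ^ 2) ^ j := by
          rw [← mul_assoc, ← pow_add, ← hl, ← pow_mul]; ring
        _ ≤ (2 * D) ^ j := Nat.pow_le_pow_left hDR _
        _ = 2 ^ j * D ^ j := mul_pow _ _ _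
    exact Nat.le_of_mul_le_mul_left hp (by positivity)
  have h5 : 2 * (4 * (2 ^ (t + 2) * ((k + 1) ^ (t + 1) * (R ^ b * (n - b).choose i)))) ≤
      2 * (n - b - (t + 2)).choose m := by
    calc 2 * (4 * (2 ^ (t + 2) * ((k + 1) ^ (t + 1) * (R ^ b * (n - b).choose i))))
        = (2 ^ (t + 5) * (k + 1) ^ (t + 1) * R ^ b) * (n - b).choose i := by ring
      _ ≤ D ^ j * (n - b).choose i := Nat.mul_le_mul_right _ hpow
      _ ≤ _ := h1.trans h3
  omega

/-- The case where there is a full `(t+2)`-set. -/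
lemma Z_case {U Z : Finset ℕ} {n k t R r : ℕ} (hU : U.card = n) (ht : 1 ≤ t) (hk : t + 3 ≤ k)
    (hZU : Z ⊆ U) (hZ : Z.card = t + 2) (hR : 64 * (r + 1) ^ 4 ≤ R) (hr : k < 2 ^ r)
    (hRt : 2 ^ (t + 5) ≤ R) (hRt2 : 2 * (t + 2) ≤ R) (hn : R ^ 2 * k ≤ n) (hkR : k ≤ R ^ 4)
    {F : Finset (Finset ℕ)} (hF : F ⊆ powersetCard k U) (htint : tIntersecting t F)
    (hno : ∀ B ∈ kern R (10 * (t + 1)) U F, t + 1 ≤ (B ∩ Z).card) :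
    (interFam F).card ≤ (interFam (AZ U Z k t)).card := by
  classical
  have hR64 : 64 ≤ R := le_trans (by nlinarith [Nat.one_le_pow 4 (r + 1) (by omega)]) hR
  set F2 := F.filter fun A => (A ∩ Z).card ≤ t with hF2
  set F1 := F.filter fun A => t + 1 ≤ (A ∩ Z).card with hF1
  by_cases hne : F2.Nonempty
  swap
  · apply card_le_card
    apply interFam_mono
    intro A hA
    refine mem_AZ.2 ⟨mem_powersetCard.1 (hF hA), ?_⟩
    by_contra hcon
    exact hne ⟨A, mem_filter.2 ⟨hA, by omega⟩⟩
  obtain ⟨m, hm⟩ : ∃ m, k = m + (t + 1) := ⟨k - (t + 1), by omega⟩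
  have em : k - t - 1 = m := by omega
  obtain ⟨B, hBU, hBq, hBk, hBspr, hBc, -⟩ := no_kernel_small (q := 10 * (t + 1)) hU (by omega) hn hF
    F2 (filter_subset _ _) hne (by
      intro A hA B hB hBA
      have h1 := hno B hB
      have h2 := (mem_filter.1 hA).2
      have := card_le_card (inter_subset_inter_right hBA : B ∩ Z ⊆ A ∩ Z)
      omega)
  have hRRk : R * (R * k) ≤ n := by
    calc R * (R * k) = R ^ 2 * k := by ring
      _ ≤ n := hn
  have h64 : 64 * (R * k) ≤ R * (R * k) := Nat.mul_le_mul_right _ hR64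
  have hkk : 64 * k ≤ R * k := Nat.mul_le_mul_right _ hR64
  have hRm : R * m ≤ R * k := Nat.mul_le_mul_left _ (by omega)
  have hN : (U \ Z).card = n - (t + 2) := by rw [card_sdiff_of_subset hZU, hU, hZ]
  have hW : n - B.card - (t + 2) ≤ ((U \ Z) \ B).card := by
    have := le_card_sdiff B (U \ Z)
    omega
  have hG : ∀ A ∈ F2, A ⊆ U ∧ A.card = k := fun A hA =>
    mem_powersetCard.1 (hF (mem_filter.1 hA).1)
  have hL := loss_large (Z := Z) (m := m) hR hr hG hBspr (by omega) (by omega)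
  have hL2 := (Nat.choose_le_choose m hW).trans hL
  have hnum := large_num hk hm hR64 hRt2 hn hkR hBq hBk
  have hlarge : 2 * (2 ^ (t + 2) * ((k + 1) ^ (t + 1) * F2.card)) ≤ (lossFam U Z m F2).card := by
    have : 4 * (2 ^ (t + 2) * ((k + 1) ^ (t + 1) * F2.card)) ≤ 2 * (lossFam U Z m F2).card := by
      refine le_trans ?_ (hnum.trans hL2)
      gcongr
    omega
  have hsmall := shadow_small (U := U) (Z := Z) (R := R) (G := F2) hm (by omega) hN (by omega)
    (fun A hA => (hG A hA).2.le)
  have hgain := gain_count hk hZ hF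
  have hloss := loss_count ht hk hZU hZ hF htint
  rw [← hF1, ← hF2, em] at hgain hloss
  set sg := ∑ j ∈ range m, (shadowFam U Z (m - 1 - j) F2).card with hsg
  set L := (lossFam U Z m F2).card with hLdef
  have hsmall2 : 2 * (2 ^ (t + 2) * sg) ≤ L := by
    have h1 : 2 ^ (t + 5) * sg ≤ R * sg := Nat.mul_le_mul_right _ hRt
    have e : 2 ^ (t + 5) * sg = 4 * (2 * (2 ^ (t + 2) * sg)) := by ring
    omega
  rw [mul_add] at hgain
  omega

lemma log_bound : ∀ L : ℕ, 40 ≤ L → 64 * (4 * L + 5) ^ 4 ≤ 2 ^ L := by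
  intro L hL
  induction L, hL using Nat.le_induction with
  | base => norm_num
  | succ L hL ih =>
    have h1 : 40 * (4 * (L + 1) + 5) ≤ 41 * (4 * L + 5) := by omega
    have h2 := Nat.pow_le_pow_left h1 4
    rw [mul_pow, mul_pow] at h2
    have h3 : (40 : ℕ) ^ 4 * (4 * (L + 1) + 5) ^ 4 ≤ 40 ^ 4 * (2 * (4 * L + 5) ^ 4) := by
      refine h2.trans ?_
      rw [← mul_assoc]
      exact Nat.mul_le_mul_right _ (by norm_num)
    have h4 := Nat.le_of_mul_le_mul_left h3 (by norm_num)
    rw [pow_succ 2 L]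
    omega

lemma split5 {a b c d e R : ℕ} (h : a + b + c + d + e ≤ R) :
    a ≤ R ∧ b ≤ R ∧ c ≤ R ∧ d ≤ R ∧ e ≤ R := by omega

lemma exists_r {R : ℕ} (hR : 2 ^ 40 ≤ R) : ∃ r, 64 * (r + 1) ^ 4 ≤ R ∧ R ^ 4 < 2 ^ r := by
  have hR0 : R ≠ 0 := by intro h; rw [h] at hR; norm_num at hR
  refine ⟨4 * (Nat.log 2 R + 1), ?_, ?_⟩
  · have h1 : 40 ≤ Nat.log 2 R := Nat.le_log_of_pow_le (by norm_num) hR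
    have h2 := log_bound _ h1
    have h3 := Nat.pow_log_le_self 2 hR0
    have e : 4 * (Nat.log 2 R + 1) + 1 = 4 * Nat.log 2 R + 5 := by ring
    rw [e]
    exact h2.trans h3
  · have h1 := Nat.lt_pow_succ_log_self (b := 2) (by norm_num) R
    calc R ^ 4 < (2 ^ (Nat.log 2 R).succ) ^ 4 := Nat.pow_lt_pow_left h1 (by norm_num)
      _ = 2 ^ (4 * (Nat.log 2 R + 1)) := by rw [← pow_mul]; congr 1; rw [Nat.succ_eq_add_one]; ring

lemma core (t : ℕ) (ht : 1 ≤ t) : ∃ R0 : ℕ, ∀ R ≥ R0, ∀ k n : ℕ, t + 3 ≤ k → R ^ 2 * k ≤ n →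
    n ≤ 4 * (R ^ 2 * k) → k ≤ R ^ 4 → ∀ F ⊆ (Finset.Icc 1 n).powersetCard k,
      tIntersecting t F → (interFam F).card ≤ (interFam (At n k t)).card := by
  classical
  obtain ⟨q, hq⟩ : ∃ q, q = 10 * (t + 1) := ⟨_, rfl⟩
  obtain ⟨K, hK⟩ : ∃ K, K = (q + 1) * q ^ q * 2 ^ q + 1 := ⟨_, rfl⟩
  refine ⟨2 ^ 40 + 2 * q + 2 ^ (t + 5) + 2 * (t + 2) +
    (2 * (t + 2).choose 2 + 2 * K + 8 ^ (t + 1) + (t + 2).choose 2 * (t + 2)), ?_⟩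
  intro R hR k n hk hn1 hn2 hkR F hF htint
  obtain ⟨h40R, hqR, h5R, htR, hbigR⟩ := split5 hR
  obtain ⟨r, hr1, hr2⟩ := exists_r h40R
  have hkr : k < 2 ^ r := lt_of_le_of_lt hkR hr2
  have hR2 : 2 ≤ R := le_trans (by omega) htR
  clear hR
  set U := Finset.Icc 1 n with hUdef
  have hU : U.card = n := by rw [hUdef, Nat.card_Icc]; omega
  have hAt : At n k t = AZ U (Finset.Icc 1 (t + 2)) k t := rfl
  have hkn : k ≤ n := by nlinarith
  have hW : Finset.Icc 1 (t + 2) ⊆ U := Finset.Icc_subset_Icc (le_refl _) (by omega)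
  have hWc : (Finset.Icc 1 (t + 2)).card = t + 2 := by rw [Nat.card_Icc]; omega
  rw [hAt]
  have hFU : ∀ A ∈ F, A ⊆ U ∧ A.card < 2 ^ r := by
    intro A hA
    have := mem_powersetCard.1 (hF hA)
    exact ⟨this.1, by rw [this.2]; exact hkr⟩
  have hkern : ∀ B ∈ kern R q U F, ∀ C ∈ kern R q U F, t ≤ (B ∩ C).card := by
    intro B hB C hC
    obtain ⟨-, hBq, G, hGF, hG⟩ := mem_kern.1 hB
    obtain ⟨-, hCq, H, hHF, hH⟩ := mem_kern.1 hC
    exact kernels_inter hr1 hqR hFU htint hGF hHF hG hH hBq hCq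
  obtain ⟨S, hS1, hS2, hS3, hS4⟩ := exists_maximal_tint t q U (kern R q U F)
    (fun B hB => ⟨(mem_kern.1 hB).1, (mem_kern.1 hB).2.1⟩) hkern
  have hMS : mins S ⊆ S := filter_subset _ _
  have hMc := mins_card (by omega) hS2 hS3 hS4
  rcases dset_classify ht (U := U) (M := mins S) (fun A hA => (hS2 A (hMS hA)).1)
    (fun B hB C hC => hS3 B (hMS hB) C (hMS hC))
    (fun B hB C hC h => (mem_filter.1 hC).2 B (hMS hB) h) with hd | ⟨Z, hZU, hZc, hZ⟩
  · set F' := F.filter fun A => ∀ B ∈ kern R q U F, ¬ B ⊆ A with hF'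
    have hf : R ^ (q + 1) * F'.card ≤ n.choose k := by
      by_cases hne : F'.Nonempty
      · obtain ⟨B, -, -, -, -, -, h⟩ := no_kernel_small (q := q) hU (by omega) hn1 hF F'
          (filter_subset _ _) hne (fun A hA B hB => (mem_filter.1 hA).2 B hB)
        exact h
      · rw [not_nonempty_iff_eq_empty.1 hne]; simp
    have hup := upper_count (q := q) hk hF (filter_subset _ _ : F' ⊆ F)
      (fun N hN => (hS2 N (hMS hN)).2) (fun B hB C hC => hS3 B (hMS hB) C (hMS hC))
      (by
        intro A hA hA'
        have : ∃ B ∈ kern R q U F, B ⊆ A := by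
          by_contra hcon
          push Not at hcon
          exact hA' (mem_filter.2 ⟨hA, hcon⟩)
        obtain ⟨B, hB, hBA⟩ := this
        obtain ⟨N, hN, hNB⟩ := exists_mins (hS1 hB)
        exact ⟨N, hN, hNB.trans hBA⟩)
    have hKle : (mins S).card * 2 ^ q + 1 ≤ K := by
      rw [hK]
      exact Nat.add_le_add_right (Nat.mul_le_mul_right _ hMc) 1
    have hnum := part4_num (K := K) hU hq hk hR2 hn1 hn2 hkR hd hf hbigR
    have hlow := AZ_lower hU hk hW hWc
    refine hup.trans (le_trans ?_ (hnum.trans hlow))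
    have := Nat.mul_le_mul_right (subs U (k - t - 2)).card hKle
    exact Nat.add_le_add_right (Nat.add_le_add_left this _) _
  · refine le_trans ?_ (AZ_card_eq hZU hW (hZc.trans hWc.symm))
    refine Z_case hU ht hk hZU hZc hr1 hkr h5R htR hn1 hkR hF htint ?_
    rw [← hq]
    intro B hB
    by_contra hcon
    have hT : ∀ v ∈ Z, t ≤ (B ∩ Z.erase v).card := by
      intro v hv
      apply hS3 B (hS1 hB)
      apply hMS
      apply hZ _ (erase_subset _ _)
      rw [card_erase_of_mem hv, hZc]; omega
    obtain ⟨v, hv⟩ : (B ∩ Z).Nonempty := by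
      obtain ⟨v, hv⟩ : Z.Nonempty := card_pos.1 (by omega)
      have h1 := hT v hv
      have h2 := card_le_card (inter_subset_inter_left (erase_subset v Z) : B ∩ Z.erase v ⊆ B ∩ Z)
      exact card_pos.1 (by omega)
    have h1 := hT v (mem_inter.1 hv).2
    have : B ∩ Z.erase v ⊆ (B ∩ Z).erase v := by
      intro x hx
      simp only [mem_inter, mem_erase] at hx ⊢
      tauto
    have h2 := card_le_card this
    have h0 : 0 < (B ∩ Z).card := card_pos.2 ⟨v, hv⟩
    rw [card_erase_of_mem hv] at h2
    omega

theorem stmt1 :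
    ∀ t : ℕ, 1 ≤ t →
      ∃ C : ℝ, 0 < C ∧
        ∀ k : ℕ, t + 3 ≤ k → ∀ n : ℕ,
          C * (k : ℝ) ^ ((3 : ℝ) / 2 + (10 + (t : ℝ)) / (2 * ((k : ℝ) - t - 2))) ≤ (n : ℝ) →
          ∀ F ⊆ (Finset.Icc 1 n).powersetCard k, tIntersecting t F →
            (interFam F).card ≤ (interFam (At n k t)).card := by
  intro t ht
  obtain ⟨R0, hcore⟩ := core t ht
  obtain ⟨c, hc⟩ : ∃ c : ℕ, c = (R0 + 1) ^ 2 + 4 := ⟨_, rfl⟩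
  refine ⟨(c : ℝ), by rw [hc]; positivity, ?_⟩
  intro k hk n hn F hF htint
  have hk1 : (1 : ℝ) ≤ (k : ℝ) := by exact_mod_cast (by omega : 1 ≤ k)
  have hkt : (t : ℝ) + 3 ≤ (k : ℝ) := by exact_mod_cast hk
  have hε : 0 ≤ (10 + (t : ℝ)) / (2 * ((k : ℝ) - t - 2)) := by
    apply div_nonneg
    · positivity
    · linarith
  have h32 : (c : ℝ) * (k : ℝ) ^ ((3 : ℝ) / 2) ≤ n := by
    refine le_trans ?_ hn
    gcongr
    linarith
  have hnk : c * k ≤ n := by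
    have : (c : ℝ) * k ≤ n := by
      refine le_trans ?_ h32
      gcongr
      calc (k : ℝ) = (k : ℝ) ^ (1 : ℝ) := (Real.rpow_one _).symm
        _ ≤ _ := Real.rpow_le_rpow_of_exponent_le hk1 (by norm_num)
    exact_mod_cast this
  have hn2 : c ^ 2 * k ^ 3 ≤ n ^ 2 := by
    have h : ((c : ℝ) * (k : ℝ) ^ ((3 : ℝ) / 2)) ^ 2 ≤ (n : ℝ) ^ 2 := by
      gcongr
    have e : ((k : ℝ) ^ ((3 : ℝ) / 2)) ^ 2 = (k : ℝ) ^ 3 := by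
      rw [← Real.rpow_natCast, ← Real.rpow_mul (by linarith), ← Real.rpow_natCast]
      norm_num
    rw [mul_pow, e] at h
    exact_mod_cast h
  have hkpos : 0 < k := by omega
  obtain ⟨R, hR⟩ : ∃ R, R = Nat.sqrt (n / k) := ⟨_, rfl⟩
  have hR1 : R ^ 2 * k ≤ n := by
    have h1 : R ^ 2 ≤ n / k := by rw [hR]; exact Nat.sqrt_le' _
    exact (Nat.mul_le_mul_right _ h1).trans (Nat.div_mul_le_self _ _)
  have hR0 : R0 + 1 ≤ R := by
    rw [hR, Nat.le_sqrt', Nat.le_div_iff_mul_le hkpos]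
    refine le_trans (Nat.mul_le_mul_right _ ?_) hnk
    omega
  have hR2 : n ≤ 4 * (R ^ 2 * k) := by
    have h1 : n / k < (R + 1) ^ 2 := by rw [hR]; exact Nat.lt_succ_sqrt' _
    have h2 : n < (R + 1) ^ 2 * k := (Nat.div_lt_iff_lt_mul hkpos).1 h1
    have h3 : (R + 1) ^ 2 ≤ (2 * R) ^ 2 := Nat.pow_le_pow_left (by omega) 2
    calc n ≤ (R + 1) ^ 2 * k := h2.le
      _ ≤ (2 * R) ^ 2 * k := Nat.mul_le_mul_right _ h3
      _ = _ := by ring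
  have hkR : k ≤ R ^ 4 := by
    have h1 : n ^ 2 ≤ (4 * (R ^ 2 * k)) ^ 2 := Nat.pow_le_pow_left hR2 2
    have h2 : 4 ^ 2 ≤ c ^ 2 := Nat.pow_le_pow_left (by omega) 2
    have h3 : 16 * k ^ 2 * k ≤ 16 * k ^ 2 * R ^ 4 := by
      calc 16 * k ^ 2 * k = 4 ^ 2 * k ^ 3 := by ring
        _ ≤ c ^ 2 * k ^ 3 := Nat.mul_le_mul_right _ h2
        _ ≤ n ^ 2 := hn2
        _ ≤ _ := h1
        _ = _ := by ring
    exact Nat.le_of_mul_le_mul_left h3 (by positivity)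
  exact hcore R (by omega) k n hk hR1 hR2 hkR F hF htint
end

section
/- There exists an absolute constant C > 0 such that for all integers k and t with 1 ≤ t < (3/4)k − 4, and all integers n ≥ C · k^3, every t-intersecting family F ⊆ binom([n],k) satisfies |I(F)| ≤ |I(A_t)|, where A_t = {A ∈ binom([n],k) : |A ∩ {1,…,t+2}| ≥ t+1}. -/
open Finset

def sig (n j : ℕ) : ℕ := ∑ i ∈ range (j + 1), n.choose i

lemma card_small_le (U : Finset ℕ) (j : ℕ) :
    (U.powerset.filter fun X => X.card ≤ j).card ≤ sig U.card j := by
  have h : (U.powerset.filter fun X => X.card ≤ j) ⊆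
      (range (j + 1)).biUnion fun i => U.powersetCard i := by
    intro X hX
    simp only [mem_filter, mem_powerset] at hX
    simp only [mem_biUnion, mem_range, mem_powersetCard]
    exact ⟨X.card, by omega, hX.1, rfl⟩
  refine (card_le_card h).trans (card_biUnion_le.trans ?_)
  simp [sig, card_powersetCard]

lemma sig_le_pow (m r : ℕ) : sig m r ≤ (m + 1) ^ r := by
  induction r with
  | zero => simp [sig]
  | succ r ih =>
    have h1 : sig m (r + 1) = sig m r + m.choose (r + 1) := by
      simp [sig, sum_range_succ]
    have h2 : m.choose (r + 1) ≤ m * (m + 1) ^ r := by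
      refine (Nat.choose_le_pow m (r + 1)).trans ?_
      rw [pow_succ, mul_comm]
      gcongr
      omega
    rw [h1, pow_succ]
    nlinarith

lemma sig_step (D k n j : ℕ) (hn : D * k ^ 3 + k ≤ n) (hj : j + 1 ≤ k) :
    D * k ^ 2 * sig n j ≤ sig n (j + 1) := by
  have h1 : sig n (j + 1) = (∑ i ∈ range (j + 1), n.choose (i + 1)) + 1 := by
    simp [sig, sum_range_succ']
  rw [h1, sig, mul_sum]
  refine le_trans (sum_le_sum ?_) (Nat.le_succ _)
  intro i hi
  rw [mem_range] at hi
  have h2 := Nat.choose_succ_right_eq n i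
  have h3 : D * k ^ 3 ≤ n - i := by omega
  refine Nat.le_of_mul_le_mul_right (c := i + 1) ?_ (Nat.succ_pos i)
  rw [h2]
  calc D * k ^ 2 * n.choose i * (i + 1) ≤ D * k ^ 2 * n.choose i * k := by gcongr; omega
    _ = n.choose i * (D * k ^ 3) := by ring
    _ ≤ _ := by gcongr

lemma sig_iter (D k n j d : ℕ) (hn : D * k ^ 3 + k ≤ n) (hj : j + d ≤ k) :
    (D * k ^ 2) ^ d * sig n j ≤ sig n (j + d) := by
  induction d with
  | zero => simp
  | succ d ih =>
    calc (D * k ^ 2) ^ (d + 1) * sig n j = D * k ^ 2 * ((D * k ^ 2) ^ d * sig n j) := by ring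
      _ ≤ D * k ^ 2 * sig n (j + d) := by gcongr; exact ih (by omega)
      _ ≤ _ := sig_step D k n (j + d) hn (by omega)

lemma choose_sub_ge (n j m : ℕ) : (n + m).choose (j + 1) ≤ n.choose (j + 1) + m * (n + m).choose j := by
  induction m with
  | zero => simp
  | succ m ih =>
    have h : (n + (m + 1)).choose (j + 1) = (n + m).choose j + (n + m).choose (j + 1) := by
      rw [← add_assoc, Nat.choose_succ_succ]
    have h2 : (n + m).choose j ≤ (n + (m + 1)).choose j := Nat.choose_le_choose j (by omega)
    rw [h]
    nlinarith

/-- main comparison -/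
lemma sig_le_choose (D k n j m : ℕ) (hD : 100 ≤ D) (hn : D * k ^ 3 + k ≤ n) (hj : j + 1 ≤ k) (hm : m ≤ k + 1) (hmn : m ≤ n) :
    sig n (j + 1) ≤ 2 * (n - m).choose (j + 1) := by
  have h0 := sig_step D k n j hn hj
  have h1 : sig n (j + 1) = sig n j + n.choose (j + 1) := by
    simp [sig, sum_range_succ]
  have h2 := choose_sub_ge (n - m) j m
  rw [Nat.sub_add_cancel hmn] at h2
  have h3 : n.choose j ≤ sig n j := by
    unfold sig
    exact single_le_sum (f := fun i => n.choose i) (fun _ _ => Nat.zero_le _) (by simp)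
  have h4 : m * n.choose j ≤ (k + 1) * sig n j := by gcongr
  have h5 : 2 * (k + 2) * sig n j ≤ D * k ^ 2 * sig n j := by
    refine Nat.mul_le_mul_right _ ?_
    have : 100 * k ^ 2 ≤ D * k ^ 2 := Nat.mul_le_mul_right _ hD
    nlinarith
  nlinarith

lemma branch (B : Finset (Finset ℕ)) (m M a b : ℕ)
    (hstep : ∀ P : Finset ℕ, a ≤ P.card → P.card < b → (∃ X ∈ B, P ⊆ X) →
      ∃ G : Finset ℕ, Disjoint G P ∧ G.card ≤ m ∧ ∀ X ∈ B, P ⊆ X → ∃ x ∈ G, x ∈ X)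
    (hM : ∀ P : Finset ℕ, P.card = b → (B.filter fun X => P ⊆ X).card ≤ M) :
    ∀ d : ℕ, ∀ P : Finset ℕ, P.card + d = b → a ≤ P.card →
      (B.filter fun X => P ⊆ X).card ≤ m ^ d * M := by
  intro d
  induction d with
  | zero => intro P hP _; simpa using hM P (by simpa using hP)
  | succ d ih =>
    intro P hP ha
    by_cases hex : ∃ X ∈ B, P ⊆ X
    · obtain ⟨G, hG, hGm, hGX⟩ := hstep P ha (by omega) hex
      have hsub : (B.filter fun X => P ⊆ X) ⊆
          G.biUnion fun x => B.filter fun X => insert x P ⊆ X := by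
        intro X hX
        rw [mem_filter] at hX
        obtain ⟨x, hx, hxX⟩ := hGX X hX.1 hX.2
        simp only [mem_biUnion, mem_filter]
        exact ⟨x, hx, hX.1, insert_subset hxX hX.2⟩
      refine (card_le_card hsub).trans (card_biUnion_le.trans ?_)
      calc _ ≤ ∑ x ∈ G, m ^ d * M := by
            refine sum_le_sum fun x hx => ?_
            have hxP : x ∉ P := Finset.disjoint_left.1 hG hx
            refine ih (insert x P) ?_ ?_ <;> rw [card_insert_of_notMem hxP] <;> omega
        _ = G.card * (m ^ d * M) := by simp
        _ ≤ m * (m ^ d * M) := by gcongr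
        _ = _ := by ring
    · have : (B.filter fun X => P ⊆ X) = ∅ := by
        rw [filter_eq_empty_iff]
        intro X hX h
        exact hex ⟨X, hX, h⟩
      simp [this]

lemma num_bound (t q r k : ℕ) (hq : q ≤ r) (hk : t + q ≤ k) :
    (t + q).choose t * ((2 * r) ^ q * k ^ (r - q)) ≤ (8 * k) ^ r := by
  have h1 : (t + q).choose t * q.factorial ≤ k ^ q := by
    have := Nat.descFactorial_eq_factorial_mul_choose (t + q) q
    rw [Nat.choose_symm_add, mul_comm, ← this]
    exact (Nat.descFactorial_le_pow _ _).trans (Nat.pow_le_pow_left hk q)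
  have h2 : r ^ q ≤ q.factorial * 4 ^ r := by
    have h := Nat.ascFactorial_eq_factorial_mul_choose r q
    have h3 : r ^ q ≤ (r + 1).ascFactorial q :=
      (Nat.pow_le_pow_left (Nat.le_succ r) q).trans (Nat.pow_succ_le_ascFactorial (r + 1) q)
    rw [h] at h3
    refine h3.trans ?_
    gcongr
    calc (r + q).choose q ≤ 2 ^ (r + q) := Nat.choose_le_two_pow _ _
      _ ≤ 2 ^ (2 * r) := Nat.pow_le_pow_right (by norm_num) (by omega)
      _ = 4 ^ r := by rw [pow_mul]; norm_num
  have h4 : 2 ^ q ≤ 2 ^ r := Nat.pow_le_pow_right (by norm_num) hq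
  calc (t + q).choose t * ((2 * r) ^ q * k ^ (r - q))
      = (t + q).choose t * (2 ^ q * r ^ q * k ^ (r - q)) := by rw [mul_pow]
    _ ≤ (t + q).choose t * (2 ^ r * (q.factorial * 4 ^ r) * k ^ (r - q)) := by gcongr
    _ = ((t + q).choose t * q.factorial) * (2 ^ r * 4 ^ r) * k ^ (r - q) := by ring
    _ ≤ k ^ q * (2 ^ r * 4 ^ r) * k ^ (r - q) := by gcongr
    _ = (2 * 4) ^ r * k ^ (q + (r - q)) := by rw [mul_pow 2 4, pow_add]; ring
    _ = _ := by rw [Nat.add_sub_cancel' hq, mul_pow 8 k]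

lemma exists_cover (t r : ℕ) (B : Finset (Finset ℕ)) (hne : B.Nonempty)
    (hcard : ∀ X ∈ B, X.card = t + r)
    (hint : ∀ X ∈ B, ∀ Y ∈ B, t ≤ (X ∩ Y).card) :
    ∃ q ≤ r, ∃ S : Finset ℕ, S.card = t + q ∧ (∀ X ∈ B, t ≤ (S ∩ X).card) ∧
      ∀ P : Finset ℕ, P.card < t + q → ∃ X ∈ B, (X ∩ P).card < t := by
  classical
  obtain ⟨X0, hX0⟩ := hne
  have hex : ∃ s, ∃ S : Finset ℕ, S.card = s ∧ ∀ X ∈ B, t ≤ (S ∩ X).card :=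
    ⟨t + r, X0, hcard X0 hX0, fun X hX => hint X0 hX0 X hX⟩
  obtain ⟨S, hS, hcov⟩ := Nat.find_spec hex
  have hle : Nat.find hex ≤ t + r := Nat.find_min' hex ⟨X0, hcard X0 hX0, fun X hX => hint X0 hX0 X hX⟩
  have hge : t ≤ Nat.find hex := by
    rw [← hS]
    exact (hcov X0 hX0).trans (card_le_card inter_subset_left)
  refine ⟨Nat.find hex - t, by omega, S, by omega, hcov, ?_⟩
  intro P hP
  by_contra hcon
  push Not at hcon
  refine Nat.find_min hex (m := P.card) (by omega) ⟨P, rfl, fun X hX => ?_⟩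
  rw [inter_comm]; exact hcon X hX

lemma count_bases (k t r : ℕ) (F B : Finset (Finset ℕ)) (htr : t + r ≤ k)
    (hF : ∀ A ∈ F, A.card ≤ k)
    (hcard : ∀ X ∈ B, X.card = t + r)
    (hint : ∀ X ∈ B, ∀ Y ∈ B, t ≤ (X ∩ Y).card)
    (hFB : ∀ A ∈ F, ∀ X ∈ B, t ≤ (A ∩ X).card)
    (hmin : ∀ X ∈ B, ∀ P, P ⊂ X → ∃ A ∈ F, (A ∩ P).card < t) :
    B.card ≤ (8 * k) ^ r := by
  classical
  rcases B.eq_empty_or_nonempty with rfl | hne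
  · simp
  obtain ⟨q, hq, S, hS, hcov, hnc⟩ := exists_cover t r B hne hcard hint
  have hit : ∀ (A P X : Finset ℕ), (A ∩ P).card < t → t ≤ (A ∩ X).card →
      ∃ x ∈ A \ P, x ∈ X := by
    intro A P X h1 h2
    by_contra hcon
    push Not at hcon
    have : A ∩ X ⊆ A ∩ P := by
      intro x hx
      rw [mem_inter] at hx ⊢
      refine ⟨hx.1, ?_⟩
      by_contra hxP
      exact hcon x (mem_sdiff.2 ⟨hx.1, hxP⟩) hx.2
    have := card_le_card this
    omega
  -- second phase
  have h2 : ∀ P : Finset ℕ, P.card = t + q → (B.filter fun X => P ⊆ X).card ≤ k ^ (r - q) := by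
    intro P hP
    have := branch B k 1 0 (t + r) ?_ ?_ (r - q) P (by omega) (by omega)
    · simpa using this
    · rintro P - hP ⟨X, hX, hPX⟩
      obtain ⟨A, hA, hAP⟩ := hmin X hX P (by
        rw [ssubset_iff_subset_ne]
        refine ⟨hPX, ?_⟩
        rintro rfl
        have := hcard P hX
        omega)
      exact ⟨A \ P, sdiff_disjoint, (card_le_card sdiff_subset).trans (hF A hA),
        fun Y hY _ => hit A P Y hAP (hFB A hA Y hY)⟩
    · intro P hP
      rw [card_le_one]
      intro X hX Y hY
      rw [mem_filter] at hX hY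
      rw [← eq_of_subset_of_card_le hX.2 (by rw [hcard X hX.1, hP]),
        ← eq_of_subset_of_card_le hY.2 (by rw [hcard Y hY.1, hP])]
  have h1 : ∀ P : Finset ℕ, P.card = t →
      (B.filter fun X => P ⊆ X).card ≤ (2 * r) ^ q * k ^ (r - q) := by
    intro P hP
    refine branch B (2 * r) (k ^ (r - q)) t (t + q) ?_ h2 q P (by omega) (by omega)
    rintro P hP1 hP2 ⟨X, hX, hPX⟩
    obtain ⟨A, hA, hAP⟩ := hnc P hP2
    refine ⟨A \ P, sdiff_disjoint, ?_, fun Y hY _ => hit A P Y hAP (hint A hA Y hY)⟩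
    have e1 : (A \ P).card + (A ∩ P).card = A.card := by
      exact card_sdiff_add_card_inter A P
    have e2 : (X \ P).card = X.card - P.card := card_sdiff_of_subset hPX
    have e3 : A ∩ X ⊆ (A ∩ P) ∪ (X \ P) := by
      intro x hx
      simp only [mem_union, mem_inter, mem_sdiff] at hx ⊢
      tauto
    have e4 := (card_le_card e3).trans (card_union_le _ _)
    have e5 := hint A hA X hX
    have e6 := hcard A hA
    have e7 := hcard X hX
    omega
  have hsub : B ⊆ (S.powersetCard t).biUnion fun P => B.filter fun X => P ⊆ X := by
    intro X hX
    obtain ⟨P, hP, hPc⟩ := exists_subset_card_eq (hcov X hX)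
    simp only [mem_biUnion, mem_powersetCard, mem_filter]
    exact ⟨P, ⟨hP.trans inter_subset_left, hPc⟩, hX, hP.trans inter_subset_right⟩
  refine (card_le_card hsub).trans (card_biUnion_le.trans ?_)
  calc _ ≤ ∑ P ∈ S.powersetCard t, (2 * r) ^ q * k ^ (r - q) :=
        sum_le_sum fun P hP => h1 P (mem_powersetCard.1 hP).2
    _ = (t + q).choose t * ((2 * r) ^ q * k ^ (r - q)) := by simp [hS]
    _ ≤ _ := num_bound t q r k hq (by omega)

lemma star_count (n k t : ℕ) (T : Finset ℕ) (hT : T.card = t) (J : Finset (Finset ℕ))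
    (hJ : ∀ I ∈ J, I ⊆ Finset.Icc 1 n ∧ T ⊆ I ∧ I.card + 1 ≤ k) :
    J.card ≤ sig n (k - t - 1) := by
  have h : J.card ≤ ((Finset.Icc 1 n).powerset.filter fun X => X.card ≤ k - t - 1).card := by
    refine card_le_card_of_injOn (fun I => I \ T) ?_ ?_
    · intro I hI
      obtain ⟨h1, h2, h3⟩ := hJ I hI
      simp only [coe_filter, mem_powerset, Set.mem_ofPred_eq]
      refine ⟨sdiff_subset.trans h1, ?_⟩
      rw [card_sdiff_of_subset h2]
      omega
    · intro I hI I' hI' h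
      have h1 := (hJ I hI).2.1
      have h2 := (hJ I' hI').2.1
      simp only at h
      rw [← sdiff_union_of_subset h1, h, sdiff_union_of_subset h2]
  simpa using h.trans (card_small_le _ _)

lemma level_count (n k t r : ℕ) (B : Finset ℕ) (hB : B.card = t + r) (J : Finset (Finset ℕ))
    (hJ : ∀ I ∈ J, I ⊆ Finset.Icc 1 n ∧ t ≤ (I ∩ B).card ∧ (I \ B).card ≤ k - t - r) :
    J.card ≤ (t + r + 1) ^ r * sig n (k - t - r) := by
  have h : J.card ≤ ((B.powerset.filter fun X => X.card ≤ r) ×ˢ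
      ((Finset.Icc 1 n).powerset.filter fun X => X.card ≤ k - t - r)).card := by
    refine card_le_card_of_injOn (fun I => (B \ I, I \ B)) ?_ ?_
    · intro I hI
      obtain ⟨h1, h2, h3⟩ := hJ I hI
      simp only [coe_product, coe_filter, mem_powerset, Set.mem_prod, Set.mem_ofPred_eq]
      refine ⟨⟨sdiff_subset, ?_⟩, sdiff_subset.trans h1, h3⟩
      have := card_sdiff_add_card_inter B I
      rw [inter_comm] at this
      omega
    · intro I hI I' hI' h
      simp only [Prod.mk.injEq] at h
      ext x
      have h1 := Finset.ext_iff.1 h.1 x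
      have h2 := Finset.ext_iff.1 h.2 x
      simp only [mem_sdiff] at h1 h2
      tauto
  rw [card_product] at h
  refine h.trans (Nat.mul_le_mul ?_ ?_)
  · refine (card_small_le B r).trans ?_
    rw [hB]; exact sig_le_pow _ _
  · simpa using card_small_le (Finset.Icc 1 n) (k - t - r)

lemma At_lower (n k t : ℕ) (hk : t + 1 ≤ k) (hn : t + 2 ≤ n) :
    (t + 2).choose t * (n - (t + 2)).choose (k - t - 1) ≤ (interFam (At n k t)).card := by
  have h : ((Finset.Icc 1 (t + 2)).powersetCard t ×ˢ
      (Finset.Icc (t + 3) n).powersetCard (k - t - 1)).card ≤ (interFam (At n k t)).card := by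
    refine card_le_card_of_injOn (fun p => p.1 ∪ p.2) ?_ ?_
    · rintro ⟨V, Z⟩ hp
      simp only [coe_product, Set.mem_prod, mem_coe, mem_powersetCard] at hp
      obtain ⟨⟨hV, hVc⟩, hZ, hZc⟩ := hp
      simp only [mem_coe]
      have hc : (Finset.Icc 1 (t + 2) \ V).card = 2 := by
        rw [card_sdiff_of_subset hV]; simp; omega
      obtain ⟨a, b, hab, he⟩ := card_eq_two.1 hc
      have ha : a ∈ Finset.Icc 1 (t + 2) \ V := by rw [he]; simp
      have hb : b ∈ Finset.Icc 1 (t + 2) \ V := by rw [he]; simp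
      rw [mem_sdiff] at ha hb
      have key : ∀ x, x ∈ Finset.Icc 1 (t + 2) → x ∉ V → insert x V ∪ Z ∈ At n k t := by
        intro x hx hxV
        have hsub : insert x V ⊆ Finset.Icc 1 (t + 2) := insert_subset hx hV
        have hdis : Disjoint (insert x V) Z := by
          refine Finset.disjoint_left.2 fun y hy hy' => ?_
          have h1 := mem_Icc.1 (hsub hy)
          have h2 := mem_Icc.1 (hZ hy')
          omega
        simp only [At, mem_filter, mem_powersetCard]
        refine ⟨⟨union_subset ?_ ?_, ?_⟩, ?_⟩
        · exact hsub.trans (Icc_subset_Icc le_rfl hn)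
        · exact hZ.trans (Icc_subset_Icc (by omega) le_rfl)
        · rw [card_union_of_disjoint hdis, card_insert_of_notMem hxV, hVc, hZc]; omega
        · have : insert x V ⊆ (insert x V ∪ Z) ∩ Finset.Icc 1 (t + 2) :=
            subset_inter subset_union_left hsub
          have h2 := card_le_card this
          rwa [card_insert_of_notMem hxV, hVc] at h2
      have hZn : ∀ y, y ∈ Finset.Icc 1 (t + 2) → y ∉ Z := by
        intro y hy hy'
        have h1 := mem_Icc.1 hy
        have h2 := mem_Icc.1 (hZ hy')
        omega
      rw [mem_interFam]
      refine ⟨_, key a ha.1 ha.2, _, key b hb.1 hb.2, ?_, ?_⟩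
      · intro heq
        have : a ∈ insert b V ∪ Z := by rw [← heq]; simp
        simp only [mem_union, mem_insert] at this
        rcases this with (h | h) | h
        · exact hab h
        · exact ha.2 h
        · exact hZn a ha.1 h
      · ext y
        simp only [mem_inter, mem_union, mem_insert]
        constructor
        · rintro ⟨(rfl | h) | h, (h' | h') | h'⟩ <;> first | exact absurd h' hab | tauto
        · tauto
    · rintro ⟨V, Z⟩ hp ⟨V', Z'⟩ hp' heq
      simp only [coe_product, Set.mem_prod, mem_coe, mem_powersetCard] at hp hp'
      simp only at heq
      have hd : ∀ {V Z : Finset ℕ}, V ⊆ Finset.Icc 1 (t + 2) → Z ⊆ Finset.Icc (t + 3) n → 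
          V = (V ∪ Z).filter (fun x => x ≤ t + 2) ∧ Z = (V ∪ Z).filter (fun x => ¬ x ≤ t + 2) := by
        intro V Z hV hZ
        constructor <;> ext x <;> simp only [mem_filter, mem_union]
        · constructor
          · intro h; exact ⟨Or.inl h, (mem_Icc.1 (hV h)).2⟩
          · rintro ⟨h | h, h'⟩
            · exact h
            · have := mem_Icc.1 (hZ h); omega
        · constructor
          · intro h; have := mem_Icc.1 (hZ h); exact ⟨Or.inr h, by omega⟩
          · rintro ⟨h | h, h'⟩
            · have := mem_Icc.1 (hV h); omega
            · exact h
      obtain ⟨e1, e2⟩ := hd hp.1.1 hp.2.1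
      obtain ⟨e3, e4⟩ := hd hp'.1.1 hp'.2.1
      rw [heq] at e1 e2
      rw [Prod.mk.injEq]
      exact ⟨e1.trans e3.symm, e2.trans e4.symm⟩
  rw [card_product, card_powersetCard, card_powersetCard] at h
  have h1 : (Finset.Icc (t + 3) n).card = n - (t + 2) := by simp
  have h2 : (Finset.Icc 1 (t + 2)).card = t + 2 := by simp
  rwa [h1, h2] at h

lemma exists_perm (n m : ℕ) (Y : Finset ℕ) (hY : Y ⊆ Finset.Icc 1 n) (hc : Y.card = m) :
    ∃ f : Equiv.Perm ℕ, (∀ x ∈ Finset.Icc 1 n, f x ∈ Finset.Icc 1 n) ∧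
      ∀ x ∈ Y, f x ∈ Finset.Icc 1 m := by
  classical
  have hmn : m ≤ n := by
    have := card_le_card hY
    simp at this; omega
  have hM : Finset.Icc 1 m ⊆ Finset.Icc 1 n := Icc_subset_Icc le_rfl hmn
  let p : {x // x ∈ Finset.Icc 1 n} → Prop := fun x => x.1 ∈ Y
  let q : {x // x ∈ Finset.Icc 1 n} → Prop := fun x => x.1 ∈ Finset.Icc 1 m
  have e1 : Fintype.card {x // p x} = m := by
    rw [← hc, ← Fintype.card_coe Y]
    exact Fintype.card_congr
      ⟨fun x => ⟨x.1.1, x.2⟩, fun y => ⟨⟨y.1, hY y.2⟩, y.2⟩, fun _ => rfl, fun _ => rfl⟩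
  have e2 : Fintype.card {x // q x} = m := by
    have : (Finset.Icc 1 m).card = m := by simp
    rw [← Fintype.card_coe (Finset.Icc 1 m)] at this
    refine Eq.trans ?_ this
    exact Fintype.card_congr
      ⟨fun x => ⟨x.1.1, x.2⟩, fun y => ⟨⟨y.1, hM y.2⟩, y.2⟩, fun _ => rfl, fun _ => rfl⟩
  let e : {x // p x} ≃ {x // q x} := Fintype.equivOfCardEq (e1.trans e2.symm)
  let g := e.extendSubtype
  refine ⟨g.ofSubtype, ?_, ?_⟩
  · intro x hx
    rw [Equiv.Perm.ofSubtype_apply_of_mem g hx]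
    exact (g ⟨x, hx⟩).2
  · intro x hx
    rw [Equiv.Perm.ofSubtype_apply_of_mem g (hY hx)]
    exact e.extendSubtype_mem ⟨x, hY hx⟩ hx

lemma interFam_AY (n k t : ℕ) (F : Finset (Finset ℕ)) (hF : F ⊆ (Finset.Icc 1 n).powersetCard k)
    (Y : Finset ℕ) (hY : Y ⊆ Finset.Icc 1 n) (hc : Y.card = t + 2)
    (hFY : ∀ A ∈ F, t + 1 ≤ (A ∩ Y).card) :
    (interFam F).card ≤ (interFam (At n k t)).card := by
  classical
  obtain ⟨f, hf1, hf2⟩ := exists_perm n (t + 2) Y hY hc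
  have hmem : ∀ A ∈ F, A.map f.toEmbedding ∈ At n k t := by
    intro A hA
    have hA' := mem_powersetCard.1 (hF hA)
    simp only [At, mem_filter, mem_powersetCard, card_map]
    refine ⟨⟨?_, hA'.2⟩, ?_⟩
    · intro y hy
      obtain ⟨x, hx, rfl⟩ := mem_map.1 hy
      exact hf1 x (hA'.1 hx)
    · have : (A ∩ Y).map f.toEmbedding ⊆ A.map f.toEmbedding ∩ Finset.Icc 1 (t + 2) := by
        intro y hy
        obtain ⟨x, hx, rfl⟩ := mem_map.1 hy
        rw [mem_inter] at hx ⊢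
        exact ⟨mem_map_of_mem _ hx.1, hf2 x hx.2⟩
      have := card_le_card this
      rw [card_map] at this
      exact (hFY A hA).trans this
  refine card_le_card_of_injOn (fun I => I.map f.toEmbedding) ?_ ?_
  · intro I hI
    rw [mem_coe, mem_interFam] at hI
    obtain ⟨A, hA, B, hB, hne, rfl⟩ := hI
    rw [mem_coe, mem_interFam]
    refine ⟨_, hmem A hA, _, hmem B hB, ?_, ?_⟩
    · intro h; exact hne (map_injective _ h)
    · exact (map_inter _ _ ).symm
  · intro I _ I' _ h
    exact map_injective _ h

lemma exists_saturated (n k t : ℕ) (F : Finset (Finset ℕ))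
    (hF : F ⊆ (Finset.Icc 1 n).powersetCard k) (hFt : tIntersecting t F) :
    ∃ G, F ⊆ G ∧ G ⊆ (Finset.Icc 1 n).powersetCard k ∧ tIntersecting t G ∧ saturated n k t G := by
  classical
  let S := ((Finset.Icc 1 n).powersetCard k).powerset.filter fun G => tIntersecting t G
  have hFS : F ∈ S := by simp only [S, mem_filter, mem_powerset]; exact ⟨hF, hFt⟩
  obtain ⟨G, hFG, hG⟩ := S.exists_le_maximal hFS
  have hGS := hG.1
  simp only [S, mem_filter, mem_powerset] at hGS
  refine ⟨G, hFG, hGS.1, hGS.2, ?_⟩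
  intro X hX hXG hcon
  have h1 : insert X G ∈ S := by
    simp only [S, mem_filter, mem_powerset]
    exact ⟨insert_subset hX hGS.1, hcon⟩
  exact hXG (hG.2 h1 (subset_insert X G) (mem_insert_self X G))

lemma mem_transv {n k t : ℕ} {F : Finset (Finset ℕ)} {T : Finset ℕ} :
    T ∈ transv n k t F ↔ T ⊆ Finset.Icc 1 n ∧ T.card ≤ k ∧ ∀ A ∈ F, t ≤ (T ∩ A).card := by
  simp [transv]

lemma transv_int (n k t : ℕ) (F : Finset (Finset ℕ)) (hn : 3 * k ≤ n) (htk : t ≤ k)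
    (hFt : tIntersecting t F) (hs : saturated n k t F)
    (T T' : Finset ℕ) (hT : T ∈ transv n k t F) (hT' : T' ∈ transv n k t F) :
    t ≤ (T ∩ T').card := by
  rw [mem_transv] at hT hT'
  have hc : k - T.card ≤ (Finset.Icc 1 n \ (T ∪ T')).card := by
    have h1 := le_card_sdiff (T ∪ T') (Finset.Icc 1 n)
    have h2 := card_union_le T T'
    simp only [Nat.card_Icc] at h1
    omega
  obtain ⟨Z, hZ, hZc⟩ := exists_subset_card_eq hc
  have hd : ∀ x ∈ Z, x ∈ Finset.Icc 1 n ∧ x ∉ T ∧ x ∉ T' := by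
    intro x hx
    have := hZ hx
    simp only [mem_sdiff, mem_union, not_or] at this
    exact this
  have hdis : Disjoint T Z := Finset.disjoint_right.2 fun x hx => (hd x hx).2.1
  have hcard : (T ∪ Z).card = k := by
    rw [card_union_of_disjoint hdis, hZc]; omega
  have hmeet : ∀ A ∈ F, t ≤ ((T ∪ Z) ∩ A).card := fun A hA =>
    (hT.2.2 A hA).trans (card_le_card (inter_subset_inter subset_union_left le_rfl))
  have hmem : T ∪ Z ∈ F := by
    by_contra hcon
    refine hs (T ∪ Z) (mem_powersetCard.2 ⟨union_subset hT.1 fun x hx => (hd x hx).1, hcard⟩) hcon ?_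
    intro A hA B hB
    rw [mem_insert] at hA hB
    rcases hA with rfl | hA <;> rcases hB with rfl | hB
    · rw [inter_self, hcard]; exact htk
    · exact hmeet B hB
    · rw [inter_comm]; exact hmeet A hA
    · exact hFt A hA B hB
  refine (hT'.2.2 _ hmem).trans (card_le_card ?_)
  intro x hx
  rw [mem_inter, mem_union] at hx
  rw [mem_inter]
  refine ⟨?_, hx.1⟩
  rcases hx.2 with h | h
  · exact h
  · exact absurd hx.1 (hd x h).2.2

/-- structure of `t`-intersecting `(t+1)`-uniform families -/
lemma struct (n t : ℕ) (U : Finset (Finset ℕ)) (hU : ∀ X ∈ U, X.card = t + 1)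
    (hUn : ∀ X ∈ U, X ⊆ Finset.Icc 1 n)
    (hint : ∀ X ∈ U, ∀ Y ∈ U, t ≤ (X ∩ Y).card) :
    (∃ T : Finset ℕ, T.card = t ∧ ∀ X ∈ U, T ⊆ X) ∨
    ∃ Y : Finset ℕ, Y.card = t + 2 ∧ Y ⊆ Finset.Icc 1 n ∧
      ∀ A : Finset ℕ, (∀ X ∈ U, t ≤ (X ∩ A).card) → t + 1 ≤ (A ∩ Y).card := by
  classical
  by_cases h2 : ∃ X1 ∈ U, ∃ X2 ∈ U, X1 ≠ X2
  · obtain ⟨X1, hX1, X2, hX2, hne⟩ := h2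
    have c1 := hU X1 hX1
    have c2 := hU X2 hX2
    have hTc : (X1 ∩ X2).card = t := by
      have h1 := hint X1 hX1 X2 hX2
      have h3 : (X1 ∩ X2).card ≠ t + 1 := by
        intro h
        have e1 : X1 ∩ X2 = X1 := eq_of_subset_of_card_le inter_subset_left (by omega)
        have e2 : X1 ∩ X2 = X2 := eq_of_subset_of_card_le inter_subset_right (by omega)
        exact hne (e1.symm.trans e2)
      have h4 := card_le_card (inter_subset_left (s₁ := X1) (s₂ := X2))
      omega
    by_cases hT : ∀ X ∈ U, X1 ∩ X2 ⊆ X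
    · exact Or.inl ⟨_, hTc, hT⟩
    right
    push Not at hT
    obtain ⟨X3, hX3, hn3⟩ := hT
    have hYc : (X1 ∪ X2).card = t + 2 := by
      have := card_union_add_card_inter X1 X2
      omega
    obtain ⟨c, hcT, hc3⟩ := not_subset.1 hn3
    have c3 := hU X3 hX3
    -- X3 is contained in the union
    have hlt : (X3 ∩ (X1 ∩ X2)).card + 1 ≤ t := by
      have : X3 ∩ (X1 ∩ X2) ⊂ X1 ∩ X2 := by
        rw [ssubset_iff_subset_ne]
        refine ⟨inter_subset_right, fun h => ?_⟩
        rw [← h] at hcT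
        exact hc3 (mem_inter.1 hcT).1
      have := card_lt_card this
      omega
    have hu : (X3 ∩ (X1 ∪ X2)).card + (X3 ∩ (X1 ∩ X2)).card = (X3 ∩ X1).card + (X3 ∩ X2).card := by
      rw [inter_union_distrib_left, inter_inter_distrib_left]
      exact card_union_add_card_inter _ _
    have h31 := hint X3 hX3 X1 hX1
    have h32 := hint X3 hX3 X2 hX2
    have h3Y : X3 ⊆ X1 ∪ X2 := by
      have : X3 ∩ (X1 ∪ X2) = X3 := eq_of_subset_of_card_le inter_subset_left (by omega)
      rw [← this]; exact inter_subset_right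
    refine ⟨X1 ∪ X2, hYc, union_subset (hUn X1 hX1) (hUn X2 hX2), ?_⟩
    intro A hA
    by_contra hcon
    have key : ∀ X ∈ U, X ⊆ X1 ∪ X2 → A ∩ (X1 ∪ X2) ⊆ X := by
      intro X hX hXY
      have h1 : X ∩ A ⊆ A ∩ (X1 ∪ X2) := by
        intro x hx
        rw [mem_inter] at hx ⊢
        exact ⟨hx.2, hXY hx.1⟩
      have h2 := hA X hX
      have : X ∩ A = A ∩ (X1 ∪ X2) := eq_of_subset_of_card_le h1 (by omega)
      rw [← this]; exact inter_subset_left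
    have hsub : A ∩ (X1 ∪ X2) ⊆ X3 ∩ (X1 ∩ X2) :=
      subset_inter (key X3 hX3 h3Y) (subset_inter (key X1 hX1 subset_union_left)
        (key X2 hX2 subset_union_right))
    have h5 := card_le_card hsub
    have h6 := hA X1 hX1
    have h7 : X1 ∩ A ⊆ A ∩ (X1 ∪ X2) := by
      intro x hx
      rw [mem_inter] at hx ⊢
      exact ⟨hx.2, mem_union_left _ hx.1⟩
    have := card_le_card h7
    omega
  · left
    push Not at h2
    rcases U.eq_empty_or_nonempty with rfl | ⟨X, hX⟩
    · exact ⟨range t, by simp, by simp⟩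
    · obtain ⟨T, hT, hTc⟩ := exists_subset_card_eq (show t ≤ X.card by rw [hU X hX]; omega)
      exact ⟨T, hTc, fun Z hZ => by rw [← h2 X hX Z hZ]; exact hT⟩

lemma term_bound (k t r n : ℕ) (ht : 1 ≤ t) (hr : 2 ≤ r) (hk : t + r ≤ k)
    (hn : 1638400 * k ^ 3 + k ≤ n) :
    100 * 2 ^ r * ((8 * k) ^ r * ((t + r + 1) ^ r * sig n (k - t - r))) ≤
      t ^ 2 * sig n (k - t - 1) := by
  obtain ⟨d, rfl⟩ : ∃ d, r = d + 2 := ⟨r - 2, by omega⟩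
  have h1 := sig_iter 1638400 k n (k - t - (d + 2)) (d + 1) hn (by omega)
  rw [show k - t - (d + 2) + (d + 1) = k - t - 1 by omega] at h1
  have hlin : ∀ d : ℕ, d + 4 ≤ 2 ^ (d + 2) := by
    intro d
    induction d with
    | zero => norm_num
    | succ d ih => rw [show d + 1 + 2 = (d + 2) + 1 by ring, pow_succ]; omega
  have h2 : (t + (d + 2) + 1) ^ (d + 2) ≤ (2 ^ (d + 2) * t) ^ 2 * (2 * k) ^ d := by
    rw [pow_add, mul_comm]
    refine Nat.mul_le_mul (Nat.pow_le_pow_left ?_ _) (Nat.pow_le_pow_left (by omega) _)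
    have := hlin d
    calc t + (d + 2) + 1 ≤ (d + 4) * t := by nlinarith
      _ ≤ _ := by gcongr
  have h3 : 100 * 128 ^ (d + 2) ≤ 1638400 ^ (d + 1) := by
    calc 100 * 128 ^ (d + 2) = 1638400 * 128 ^ d := by ring
      _ ≤ 1638400 * 1638400 ^ d := by gcongr; norm_num
      _ = _ := by ring
  set s := sig n (k - t - (d + 2))
  have h128 : (128 : ℕ) ^ d = 2 ^ d * 8 ^ d * (2 ^ d) ^ 2 * 2 ^ d := by
    rw [← pow_mul, mul_comm d 2, pow_mul, ← mul_pow, ← mul_pow, ← mul_pow]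
    norm_num
  calc 100 * 2 ^ (d + 2) * ((8 * k) ^ (d + 2) * ((t + (d + 2) + 1) ^ (d + 2) * s))
      ≤ 100 * 2 ^ (d + 2) * ((8 * k) ^ (d + 2) * ((2 ^ (d + 2) * t) ^ 2 * (2 * k) ^ d * s)) := by
        gcongr
    _ = t ^ 2 * ((100 * (4 * 64 * 16 * (2 ^ d * 8 ^ d * (2 ^ d) ^ 2 * 2 ^ d))) *
          (k ^ 2) ^ (d + 1) * s) := by
        simp only [mul_pow, pow_add, ← pow_mul]
        ring
    _ ≤ t ^ 2 * ((100 * 128 ^ (d + 2)) * (k ^ 2) ^ (d + 1) * s) := by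
        rw [← h128, pow_add 128 d 2]
        refine Nat.mul_le_mul_left _ (Nat.mul_le_mul_right _ (Nat.mul_le_mul_right _ ?_))
        omega
    _ ≤ t ^ 2 * (1638400 ^ (d + 1) * (k ^ 2) ^ (d + 1) * s) := by gcongr
    _ = t ^ 2 * ((1638400 * k ^ 2) ^ (d + 1) * s) := by rw [mul_pow]
    _ ≤ _ := by gcongr

lemma sum_bound (a : ℕ → ℕ) (M R : ℕ) (h : ∀ r ∈ Finset.Icc 2 R, 100 * 2 ^ r * a r ≤ M) :
    50 * ∑ r ∈ Finset.Icc 2 R, a r ≤ M := by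
  have h1 : ∑ r ∈ Finset.Icc 2 R, (a r : ℝ) ≤
      ∑ r ∈ Finset.Icc 2 R, (M : ℝ) / 100 * (1 / 2) ^ r := by
    refine sum_le_sum fun r hr => ?_
    have h2 : (100 * 2 ^ r * a r : ℝ) ≤ M := by exact_mod_cast h r hr
    rw [one_div, inv_pow, ← div_eq_mul_inv, div_div, le_div_iff₀ (by positivity)]
    linarith
  have h2 : ∑ r ∈ Finset.Icc 2 R, (1 / (2 : ℝ)) ^ r ≤ 2 := by
    refine le_trans (sum_le_sum_of_subset_of_nonneg ?_ ?_) (sum_geometric_two_le (R + 1))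
    · intro x hx
      rw [mem_Icc] at hx
      rw [mem_range]; omega
    · intros; positivity
  rw [← mul_sum] at h1
  have hM : (0 : ℝ) ≤ M := Nat.cast_nonneg M
  have h3 : (50 : ℝ) * ∑ r ∈ Finset.Icc 2 R, (a r : ℝ) ≤ M := by nlinarith
  exact_mod_cast h3

lemma exists_min (n k t : ℕ) (F : Finset (Finset ℕ)) (A : Finset ℕ)
    (hA : A ∈ transv n k t F) : ∃ X ∈ minFam (transv n k t F), X ⊆ A := by
  obtain ⟨X, hXA, hX⟩ := (transv n k t F).exists_le_minimal hA
  refine ⟨X, ?_, hXA⟩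
  rw [minFam, mem_filter]
  exact ⟨hX.1, fun Y hY hYX => le_antisymm hYX (hX.2 hY hYX)⟩

lemma high_count (n k t : ℕ) (F : Finset (Finset ℕ)) (ht : 1 ≤ t) (htk : t ≤ k)
    (hn : 1638400 * k ^ 3 + k ≤ n) (hF : F ⊆ (Finset.Icc 1 n).powersetCard k)
    (hFt : tIntersecting t F) (hs : saturated n k t F) (J : Finset (Finset ℕ))
    (hJ : ∀ I ∈ J, ∃ r ∈ Finset.Icc 2 (k - t), ∃ X ∈ minFam (transv n k t F), X.card = t + r ∧
      I ⊆ Finset.Icc 1 n ∧ t ≤ (I ∩ X).card ∧ (I \ X).card ≤ k - t - r) :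
    50 * J.card ≤ t ^ 2 * sig n (k - t - 1) := by
  classical
  have h3k : 3 * k ≤ n := by
    have : k ≤ k ^ 3 := Nat.le_self_pow (by norm_num) k
    omega
  let B : ℕ → Finset (Finset ℕ) := fun r => (minFam (transv n k t F)).filter fun X => X.card = t + r
  have hsub : J ⊆ (Finset.Icc 2 (k - t)).biUnion fun r => (B r).biUnion fun X =>
      J.filter fun I => I ⊆ Finset.Icc 1 n ∧ t ≤ (I ∩ X).card ∧ (I \ X).card ≤ k - t - r := by
    intro I hI
    obtain ⟨r, hr, X, hX, hXc, h⟩ := hJ I hI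
    simp only [mem_biUnion, mem_filter, B]
    exact ⟨r, hr, X, ⟨hX, hXc⟩, hI, h⟩
  have hle : J.card ≤ ∑ r ∈ Finset.Icc 2 (k - t),
      ((8 * k) ^ r * ((t + r + 1) ^ r * sig n (k - t - r))) := by
    refine (card_le_card hsub).trans (card_biUnion_le.trans (sum_le_sum fun r hr => ?_))
    rw [mem_Icc] at hr
    refine card_biUnion_le.trans ?_
    have hB : (B r).card ≤ (8 * k) ^ r := by
      have hmem : ∀ X ∈ B r, X ∈ transv n k t F ∧ X.card = t + r ∧
          ∀ P ∈ transv n k t F, P ⊆ X → P = X := by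
        intro X hX
        simp only [B, minFam, mem_filter] at hX
        exact ⟨hX.1.1, hX.2, hX.1.2⟩
      refine count_bases k t r F (B r) (by omega) ?_ ?_ ?_ ?_ ?_
      · intro A hA
        exact (mem_powersetCard.1 (hF hA)).2.le
      · intro X hX; exact (hmem X hX).2.1
      · intro X hX Y hY
        exact transv_int n k t F h3k htk hFt hs X Y (hmem X hX).1 (hmem Y hY).1
      · intro A hA X hX
        rw [inter_comm]
        exact (mem_transv.1 (hmem X hX).1).2.2 A hA
      · intro X hX P hP
        by_contra hcon
        push Not at hcon
        have hXt := mem_transv.1 (hmem X hX).1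
        have hPt : P ∈ transv n k t F := by
          rw [mem_transv]
          refine ⟨hP.1.trans hXt.1, (card_le_card hP.1).trans hXt.2.1, fun A hA => ?_⟩
          rw [inter_comm]; exact hcon A hA
        exact hP.ne ((hmem X hX).2.2 P hPt hP.1)
    calc _ ≤ ∑ X ∈ B r, (t + r + 1) ^ r * sig n (k - t - r) := by
          refine sum_le_sum fun X hX => ?_
          refine level_count n k t r X (mem_filter.1 hX).2 _ fun I hI => (mem_filter.1 hI).2
      _ = (B r).card * ((t + r + 1) ^ r * sig n (k - t - r)) := by simp
      _ ≤ _ := by gcongr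
  refine (Nat.mul_le_mul_left 50 hle).trans ?_
  refine sum_bound _ _ _ fun r hr => ?_
  rw [mem_Icc] at hr
  exact term_bound k t r n ht hr.1 (by omega) hn

lemma main_nat (n k t : ℕ) (F : Finset (Finset ℕ)) (ht : 1 ≤ t) (htk : t + 4 ≤ k)
    (hn : 1638400 * k ^ 3 + k ≤ n) (hF : F ⊆ (Finset.Icc 1 n).powersetCard k)
    (hFt : tIntersecting t F) (hs : saturated n k t F) :
    (interFam F).card ≤ (interFam (At n k t)).card := by
  classical
  have hk3 : k ≤ k ^ 3 := Nat.le_self_pow (by norm_num) k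
  have h3k : 3 * k ≤ n := by omega
  have hlow := At_lower n k t (by omega) (by omega)
  have hsig := sig_le_choose 1638400 k n (k - t - 2) (t + 2) (by norm_num) hn (by omega)
    (by omega) (by omega)
  rw [show k - t - 2 + 1 = k - t - 1 by omega] at hsig
  have hch : 2 * (t + 2).choose t = (t + 2) * (t + 1) := by
    rw [Nat.choose_symm_add, Nat.choose_two_right]
    exact Nat.mul_div_cancel' (Nat.even_mul_pred_self (t + 2)).two_dvd
  -- arithmetic endgame
  have hend : 50 * (interFam F).card ≤ 50 * sig n (k - t - 1) + t ^ 2 * sig n (k - t - 1) →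
      (interFam F).card ≤ (interFam (At n k t)).card := by
    intro h
    set c := (n - (t + 2)).choose (k - t - 1)
    have h1 : (50 + t ^ 2) * sig n (k - t - 1) ≤ (50 + t ^ 2) * (2 * c) := by gcongr
    have h2 : (50 + t ^ 2) * (2 * c) ≤ 25 * ((t + 2) * (t + 1)) * c := by
      rw [← mul_assoc]
      refine Nat.mul_le_mul_right c ?_
      nlinarith
    rw [← hch] at h2
    have h3 : 25 * (2 * (t + 2).choose t) * c = 50 * ((t + 2).choose t * c) := by ring
    have h4 : 50 * sig n (k - t - 1) + t ^ 2 * sig n (k - t - 1) =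
      (50 + t ^ 2) * sig n (k - t - 1) := by ring
    omega
  have hFc : ∀ A ∈ F, A ⊆ Finset.Icc 1 n ∧ A.card = k := fun A hA => mem_powersetCard.1 (hF hA)
  have hIcard : ∀ A ∈ F, ∀ B ∈ F, A ≠ B → (A ∩ B).card + 1 ≤ k := by
    intro A hA B hB hne
    by_contra hcon
    have e1 : A ∩ B = A := eq_of_subset_of_card_le inter_subset_left (by
      have := (hFc A hA).2; omega)
    have e2 : A ∩ B = B := eq_of_subset_of_card_le inter_subset_right (by
      have := (hFc B hB).2; omega)
    exact hne (e1.symm.trans e2)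
  by_cases hsm : ∃ T ∈ transv n k t F, T.card ≤ t
  · obtain ⟨T, hT, hTc⟩ := hsm
    rw [mem_transv] at hT
    have hTA : ∀ A ∈ F, T ⊆ A := by
      intro A hA
      have := hT.2.2 A hA
      have e : T ∩ A = T := eq_of_subset_of_card_le inter_subset_left (by omega)
      rw [← e]; exact inter_subset_right
    rcases F.eq_empty_or_nonempty with rfl | ⟨A0, hA0⟩
    · simp [interFam]
    have hTt : T.card = t :=
      le_antisymm hTc ((hT.2.2 A0 hA0).trans (card_le_card inter_subset_left))
    refine hend (le_trans (Nat.mul_le_mul_left 50 ?_) (Nat.le_add_right _ _))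
    refine star_count n k t T hTt _ fun I hI => ?_
    obtain ⟨A, hA, B, hB, hne, rfl⟩ := mem_interFam.1 hI
    exact ⟨inter_subset_left.trans (hFc A hA).1, subset_inter (hTA A hA) (hTA B hB),
      hIcard A hA B hB hne⟩
  push Not at hsm
  rcases struct n t ((transv n k t F).filter fun X => X.card = t + 1)
    (fun X hX => (mem_filter.1 hX).2) (fun X hX => (mem_transv.1 (mem_filter.1 hX).1).1)
    (fun X hX Y hY => transv_int n k t F h3k (by omega) hFt hs X Y (mem_filter.1 hX).1
      (mem_filter.1 hY).1) with ⟨T, hTc, hT⟩ | ⟨Y, hYc, hYn, hY⟩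
  · refine hend ?_
    have hsplit := card_filter_add_card_filter_not (s := interFam F) (fun I => T ⊆ I ∧ I.card + 1 ≤ k)
    have hl := star_count n k t T hTc ((interFam F).filter fun I => T ⊆ I ∧ I.card + 1 ≤ k) (by
      intro I hI
      rw [mem_filter] at hI
      obtain ⟨A, hA, B, hB, hne, rfl⟩ := mem_interFam.1 hI.1
      exact ⟨inter_subset_left.trans (hFc A hA).1, hI.2⟩)
    have hh := high_count n k t F ht (by omega) hn hF hFt hs
      ((interFam F).filter fun I => ¬ (T ⊆ I ∧ I.card + 1 ≤ k)) (by
      intro I hI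
      rw [mem_filter] at hI
      obtain ⟨hI1, hI2⟩ := hI
      obtain ⟨A, hA, B, hB, hne, rfl⟩ := mem_interFam.1 hI1
      have htrF : ∀ A ∈ F, A ∈ transv n k t F := fun A hA =>
        mem_transv.2 ⟨(hFc A hA).1, (hFc A hA).2.le, fun B hB => hFt A hA B hB⟩
      -- a member with a large base does the job
      have hbig : ∀ A ∈ F, ∀ B ∈ F, ∀ X ∈ minFam (transv n k t F), X ⊆ A → t + 2 ≤ X.card →
          ∃ r ∈ Finset.Icc 2 (k - t), ∃ X ∈ minFam (transv n k t F), X.card = t + r ∧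
            A ∩ B ⊆ Finset.Icc 1 n ∧ t ≤ (A ∩ B ∩ X).card ∧ ((A ∩ B) \ X).card ≤ k - t - r := by
        intro A hA B hB X hX hXA hXc
        have hXt := mem_transv.1 (mem_filter.1 hX).1
        have hAc := hFc A hA
        refine ⟨X.card - t, ?_, X, hX, by omega, inter_subset_left.trans hAc.1, ?_, ?_⟩
        · rw [mem_Icc]; omega
        · refine (hXt.2.2 B hB).trans (card_le_card ?_)
          intro x hx
          rw [mem_inter] at hx
          simp only [mem_inter]
          exact ⟨⟨hXA hx.1, hx.2⟩, hx.1⟩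
        · have h1 : ((A ∩ B) \ X).card ≤ (A \ X).card :=
            card_le_card (sdiff_subset_sdiff inter_subset_left le_rfl)
          rw [card_sdiff_of_subset hXA] at h1
          omega
      obtain ⟨X, hX, hXA⟩ := exists_min n k t F A (htrF A hA)
      obtain ⟨Z, hZ, hZB⟩ := exists_min n k t F B (htrF B hB)
      by_cases hXc : t + 2 ≤ X.card
      · exact hbig A hA B hB X hX hXA hXc
      by_cases hZc : t + 2 ≤ Z.card
      · rw [inter_comm]; exact hbig B hB A hA Z hZ hZB hZc
      exfalso
      have hX1 := (mem_filter.1 hX).1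
      have hZ1 := (mem_filter.1 hZ).1
      have c1 := hsm X hX1
      have c2 := hsm Z hZ1
      have s1 := hT X (mem_filter.2 ⟨hX1, by omega⟩)
      have s2 := hT Z (mem_filter.2 ⟨hZ1, by omega⟩)
      exact hI2 ⟨subset_inter (s1.trans hXA) (s2.trans hZB), hIcard A hA B hB hne⟩)
    omega
  · refine interFam_AY n k t F hF Y hYn hYc fun A hA => hY A fun X hX => ?_
    exact (mem_transv.1 (mem_filter.1 hX).1).2.2 A hA

theorem stmt2 :
    ∃ C : ℝ, 0 < C ∧
      ∀ k t : ℕ, 1 ≤ t → (t : ℝ) < 3 / 4 * (k : ℝ) - 4 →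
        ∀ n : ℕ, C * (k : ℝ) ^ 3 ≤ (n : ℝ) →
          ∀ F ⊆ (Finset.Icc 1 n).powersetCard k, tIntersecting t F →
            (interFam F).card ≤ (interFam (At n k t)).card := by
  refine ⟨1638401, by norm_num, ?_⟩
  intro k t ht htk n hn F hF hFt
  have h1 : t + 4 ≤ k := by
    have hk : (0 : ℝ) ≤ k := Nat.cast_nonneg k
    have : (t : ℝ) + 4 ≤ k := by linarith
    exact_mod_cast this
  have h2 : 1638401 * k ^ 3 ≤ n := by exact_mod_cast hn
  have h3 : k ≤ k ^ 3 := Nat.le_self_pow (by norm_num) k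
  obtain ⟨G, hFG, hG, hGt, hGs⟩ := exists_saturated n k t F hF hFt
  exact (card_le_card (interFam_mono hFG)).trans
    (main_nat n k t G ht h1 (by omega) hG hGt hGs)
end

section
/- Let t ≥ 1 and n ≥ t+2 be integers and let F ⊆ binom([n], t+1) be a t-intersecting family. Then either F is a sunflower, i.e., there exists a t-element set X ⊆ [n] with X ⊆ F for every F ∈ F, or F is a (t+2)-triangle, i.e., there exists a (t+2)-element set Y ⊆ [n] such that F ⊆ Y for every F ∈ F (so that every member of F is a (t+1)-element subset of Y). -/
open Finset

theorem stmt7_key (t : ℕ) (A B C : Finset ℕ) (hC : C.card = t + 1)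
    (hAB : (A ∩ B).card ≤ t) (hCA : t ≤ (C ∩ A).card) (hCB : t ≤ (C ∩ B).card)
    (h : ¬ A ∩ B ⊆ C) : C ⊆ A ∪ B := by
  have h1 : (C ∩ (A ∩ B)).card < (A ∩ B).card := by
    apply Finset.card_lt_card
    refine ⟨Finset.inter_subset_right, fun h' => h (h'.trans Finset.inter_subset_left)⟩
  have h2 := Finset.card_union_add_card_inter (C ∩ A) (C ∩ B)
  rw [← Finset.inter_union_distrib_left, ← Finset.inter_inter_distrib_left] at h2
  have h3 : C ∩ (A ∪ B) = C :=
    Finset.eq_of_subset_of_card_le Finset.inter_subset_left (by omega)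
  exact Finset.inter_eq_left.mp h3

theorem stmt7_card (t : ℕ) (A B : Finset ℕ) (hA : A.card = t + 1) (hB : B.card = t + 1)
    (h : t ≤ (A ∩ B).card) (hne : A ≠ B) : (A ∩ B).card = t := by
  by_contra hc
  have h1 : A ∩ B = A := Finset.eq_of_subset_of_card_le Finset.inter_subset_left (by omega)
  exact hne (Finset.eq_of_subset_of_card_le (Finset.inter_eq_left.mp h1) (by omega))

theorem stmt7 (t n : ℕ) (ht : 1 ≤ t) (hn : t + 2 ≤ n) (F : Finset (Finset ℕ))
    (hF : F ⊆ (Finset.Icc 1 n).powersetCard (t + 1)) (hint : tIntersecting t F) :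
    (∃ X : Finset ℕ, X ⊆ Finset.Icc 1 n ∧ X.card = t ∧ ∀ A ∈ F, X ⊆ A) ∨
    (∃ Y : Finset ℕ, Y ⊆ Finset.Icc 1 n ∧ Y.card = t + 2 ∧ ∀ A ∈ F, A ⊆ Y) := by
  have hc : ∀ A ∈ F, A.card = t + 1 := fun A hA => (Finset.mem_powersetCard.mp (hF hA)).2
  have hs : ∀ A ∈ F, A ⊆ Finset.Icc 1 n := fun A hA => (Finset.mem_powersetCard.mp (hF hA)).1
  by_cases hsub : ∃ A ∈ F, ∃ B ∈ F, A ≠ B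
  · obtain ⟨A, hA, B, hB, hne⟩ := hsub
    have hAB := stmt7_card t A B (hc A hA) (hc B hB) (hint A hA B hB) hne
    by_cases hX : ∀ C ∈ F, A ∩ B ⊆ C
    · exact Or.inl ⟨A ∩ B, Finset.inter_subset_left.trans (hs A hA), hAB, hX⟩
    · push Not at hX
      obtain ⟨C, hC, hCX⟩ := hX
      have hCY := stmt7_key t A B C (hc C hC) hAB.le (hint C hC A hA) (hint C hC B hB) hCX
      refine Or.inr ⟨A ∪ B, Finset.union_subset (hs A hA) (hs B hB), ?_, ?_⟩
      · have := Finset.card_union_add_card_inter A B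
        have := hc A hA
        have := hc B hB
        omega
      · intro D hD
        by_cases hDX : A ∩ B ⊆ D
        · by_cases hDA : A = D
          · exact hDA ▸ Finset.subset_union_left
          have hAC : A ≠ C := fun h => hCX (h ▸ Finset.inter_subset_left)
          have hACc := stmt7_card t A C (hc A hA) (hc C hC) (hint A hA C hC) hAC
          have hADc := stmt7_card t A D (hc A hA) (hc D hD) (hint A hA D hD) hDA
          have h1 : A ∩ B = A ∩ D := Finset.eq_of_subset_of_card_le
            (Finset.subset_inter Finset.inter_subset_left hDX) (by omega)
          have h2 : ¬ A ∩ C ⊆ D := by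
            intro h
            have h3 : A ∩ C = A ∩ D := Finset.eq_of_subset_of_card_le
              (Finset.subset_inter Finset.inter_subset_left h) (by omega)
            exact hCX (by rw [h1, ← h3]; exact Finset.inter_subset_right)
          exact (stmt7_key t A C D (hc D hD) hACc.le (hint D hD A hA) (hint D hD C hC) h2).trans
            (Finset.union_subset Finset.subset_union_left hCY)
        · exact stmt7_key t A B D (hc D hD) hAB.le (hint D hD A hA) (hint D hD B hB) hDX
  · push Not at hsub
    left
    rcases F.eq_empty_or_nonempty with rfl | ⟨A, hA⟩
    · obtain ⟨X, hX, hXc⟩ := Finset.exists_subset_card_eq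
        (s := Finset.Icc 1 n) (n := t) (by simp; omega)
      exact ⟨X, hX, hXc, by simp⟩
    · obtain ⟨X, hX, hXc⟩ := Finset.exists_subset_card_eq
        (s := A) (n := t) (by rw [hc A hA]; omega)
      exact ⟨X, hX.trans (hs A hA), hXc, fun B hB => hsub A hA B hB ▸ hX⟩
end
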